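/- arXiv:1412.6406 — 3 statements merged into one kernel-verified Lean document; each statement's English description precedes it below -/
import Mathlib

section
/- (Annular classicalisation theorem) Let A = ((a_n, r_n)) be an annular abstract Swiss cheese with δ_ann(A) > 0. Then there exists a classical, annular abstract Swiss cheese B = ((b_n, s_n)) with b_0 = a_0 such that δ_ann(B) ≥ δ_ann(A) and X_B ⊆ X_A. -/
open Metric Set

/-- An abstract Swiss cheese: a sequence `((a_n, r_n))_{n ≥ 0}` of centres `a n ∈ ℂ` and
non-negative radii `r n ∈ [0, ∞)`. -/
structure SwissCheese where
  a : ℕ → ℂ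
  r : ℕ → ℝ
  r_nonneg : ∀ n, 0 ≤ r n

namespace SwissCheese

/-- The associated Swiss cheese set `X_A = closedBall(a₀, r₀) ∖ ⋃_{n ≥ 1} ball(a_n, r_n)`. -/
def cheeseSet (A : SwissCheese) : Set ℂ :=
  closedBall (A.a 0) (A.r 0) \ ⋃ n ∈ Set.Ici 1, ball (A.a n) (A.r n)

/-- The significant index set `S_A = {n ≥ 1 : r_n > 0}`. -/
def sig (A : SwissCheese) : Set ℕ := {n | 1 ≤ n ∧ 0 < A.r n}

/-- The radius sum `ρ(A) = ∑_{n ≥ 1} r_n` is finite. -/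
def RadSummable (A : SwissCheese) : Prop := Summable fun n => A.r (n + 1)

/-- The radius sum `ρ(A) = ∑_{n ≥ 1} r_n`. -/
noncomputable def radSum (A : SwissCheese) : ℝ := ∑' n, A.r (n + 1)

/-- The discrepancy `δ₁(A) = r₀ − ∑_{n ≥ 1} r_n`. -/
noncomputable def disc (A : SwissCheese) : ℝ := A.r 0 - A.radSum

/-- `A` is classical: `ρ(A) < ∞`, `r₀ > 0`, each significant closed disk is contained in
`ball(a₀, r₀)`, and distinct significant closed disks are disjoint. -/
def IsClassical (A : SwissCheese) : Prop :=
  A.RadSummable ∧ 0 < A.r 0 ∧ ∀ k ∈ A.sig,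
    closedBall (A.a k) (A.r k) ⊆ ball (A.a 0) (A.r 0) ∧
    ∀ l ∈ A.sig, l ≠ k → closedBall (A.a k) (A.r k) ∩ closedBall (A.a l) (A.r l) = ∅

/-- `A` is semiclassical: `ρ(A) < ∞`, `r₀ > 0`, each significant open disk is contained in
`ball(a₀, r₀)`, and distinct significant open disks are disjoint. -/
def IsSemiclassical (A : SwissCheese) : Prop :=
  A.RadSummable ∧ 0 < A.r 0 ∧ ∀ k ∈ A.sig,
    ball (A.a k) (A.r k) ⊆ ball (A.a 0) (A.r 0) ∧
    ∀ l ∈ A.sig, l ≠ k → ball (A.a k) (A.r k) ∩ ball (A.a l) (A.r l) = ∅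

/-- `A` is annular: `a₀ = a₁` and `r₀ > r₁ > 0`. -/
def IsAnnular (A : SwissCheese) : Prop := A.a 0 = A.a 1 ∧ A.r 1 < A.r 0 ∧ 0 < A.r 1

/-- The annular radius sum `ρ_ann(A) = ∑_{n ≥ 2} r_n`. -/
noncomputable def annRadSum (A : SwissCheese) : ℝ := ∑' n, A.r (n + 2)

/-- The annular discrepancy `δ_ann(A) = r₀ − r₁ − 2 ∑_{n ≥ 2} r_n`. -/
noncomputable def annDisc (A : SwissCheese) : ℝ := A.r 0 - A.r 1 - 2 * A.annRadSum

/-- `A` is redundancy-free: every significant open disk meets `closedBall(a₀, r₀)`, and no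
significant open disk is contained in another one. -/
def IsRedundancyFree (A : SwissCheese) : Prop :=
  ∀ k ∈ A.sig, (ball (A.a k) (A.r k) ∩ closedBall (A.a 0) (A.r 0)).Nonempty ∧
    ∀ l ∈ A.sig, l ≠ k → ¬ ball (A.a k) (A.r k) ⊆ ball (A.a l) (A.r l)

/-- `H_A(U)`: the set of significant indices whose closed disk meets `U`. -/
def HSet (A : SwissCheese) (U : Set ℂ) : Set ℕ :=
  {n | n ∈ A.sig ∧ (closedBall (A.a n) (A.r n) ∩ U).Nonempty}

/-- `ρ_U(A) = ∑_{n ∈ H_A(U)} r_n`. -/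
noncomputable def rhoU (A : SwissCheese) (U : Set ℂ) : ℝ := ∑' n : A.HSet U, A.r n

/-- The error set `E(A)`. -/
def errorSet (A : SwissCheese) : Set ℂ :=
  (⋃ m ∈ A.sig, ⋃ n ∈ A.sig, ⋃ _ : m ≠ n,
      closedBall (A.a m) (A.r m) ∩ closedBall (A.a n) (A.r n)) ∪
    ⋃ n ∈ A.sig, (ball (A.a 0) (A.r 0))ᶜ ∩ closedBall (A.a n) (A.r n)

/-- A Swiss cheese set is compact. -/
instance (A : SwissCheese) : CompactSpace A.cheeseSet :=
  isCompact_iff_compactSpace.mp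
    ((isCompact_closedBall _ _).diff (isOpen_biUnion fun _ _ => isOpen_ball))

end SwissCheese

/-!
Call a sequence of disks `q` a refinement of `p` if every disk of `p` either misses the outer disk
of `q` or lies inside a disk of `q` of no larger index; then `X_q ⊆ X_p`. Among the concentric
refinements of `A` with annular discrepancy at least `δ_ann(A)` we minimise the strictly
subadditive size `∑_{n ≥ 2} (1 - exp (-r_n))`. As each disk of `A` has only finitely many
candidates to be absorbed by, being a refinement is a closed condition; the refinements with centres
in a fixed ball therefore form a compact set, on which the size is lower semicontinuous, so a
minimiser exists.

A minimiser is classical: if a hole touched the outer circle, the inner disk or another hole, then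
deleting it and, respectively, decreasing `r₀` by twice its radius, increasing `r₁` by twice its
radius, or fusing the two holes into one whose radius is the sum of theirs would preserve `δ_ann`
and strictly decrease the size.
-/

theorem exists_isMinOn_tsum {ι X : Type*} [TopologicalSpace X] {K : Set X} (hK : IsCompact K)
    (hne : K.Nonempty) {f : ι → X → ℝ} (hcont : ∀ i, ContinuousOn (f i) K)
    (hnonneg : ∀ x ∈ K, ∀ i, 0 ≤ f i x) (hsum : ∀ x ∈ K, Summable fun i => f i x) :
    ∃ x ∈ K, IsMinOn (fun x => ∑' i, f i x) K x := by
  have hlsc : LowerSemicontinuousOn (fun x => ∑' i, ENNReal.ofReal (f i x)) K :=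
    lowerSemicontinuousOn_tsum fun i =>
      (ENNReal.continuous_ofReal.comp_continuousOn (hcont i)).lowerSemicontinuousOn
  obtain ⟨x, hx, hmin⟩ := hlsc.exists_isMinOn hne hK
  refine ⟨x, hx, isMinOn_iff.2 fun y hy => ?_⟩
  have hle := isMinOn_iff.1 hmin y hy
  rw [← ENNReal.ofReal_tsum_of_nonneg (hnonneg x hx) (hsum x hx),
    ← ENNReal.ofReal_tsum_of_nonneg (hnonneg y hy) (hsum y hy)] at hle
  exact (ENNReal.ofReal_le_ofReal_iff (tsum_nonneg (hnonneg y hy))).1 hle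

section Penalty

/-- The contribution of a hole of radius `x` to the size that is minimised. Any continuous,
strictly subadditive function on `[0, ∞)` with values between `0` and `x` would serve. -/
noncomputable def penalty (x : ℝ) : ℝ := 1 - Real.exp (-x)

theorem continuous_penalty : Continuous penalty := by
  unfold penalty
  fun_prop

theorem penalty_zero : penalty 0 = 0 := by
  simp [penalty]

theorem penalty_pos {x : ℝ} (hx : 0 < x) : 0 < penalty x := by
  simpa [penalty] using hx

theorem penalty_nonneg {x : ℝ} (hx : 0 ≤ x) : 0 ≤ penalty x := by
  simpa [penalty] using hx

theorem penalty_le_self (x : ℝ) : penalty x ≤ x := by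
  unfold penalty
  linarith [Real.add_one_le_exp (-x)]

theorem penalty_add_lt {x y : ℝ} (hx : 0 < x) (hy : 0 < y) :
    penalty (x + y) < penalty x + penalty y := by
  have hprod : penalty x + penalty y - penalty (x + y) = penalty x * penalty y := by
    simp only [penalty, neg_add, Real.exp_add]
    ring
  linarith [mul_pos (penalty_pos hx) (penalty_pos hy)]

end Penalty

/-- A sequence of disks of `E`, given by centres and radii. This is an abstract Swiss cheese
without the requirement that radii be non-negative, encoded as a function into a product so that
it carries the topology of pointwise convergence. -/
abbrev DiskSeq (E : Type*) := ℕ → E × ℝ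

namespace DiskSeq

section Definitions

variable {E : Type*}

/-- The radii `r_{n+2}` of the disks that are neither the outer nor the inner boundary disk of an
annular Swiss cheese. -/
abbrev holeRadius (p : DiskSeq E) (n : ℕ) : ℝ := (p (n + 2)).2

/-- The annular discrepancy `δ_ann`, as in `SwissCheese.annDisc`. -/
noncomputable def annDisc (p : DiskSeq E) : ℝ := (p 0).2 - (p 1).2 - 2 * ∑' n, p.holeRadius n

/-- The functional minimised over all admissible refinements. -/
noncomputable def size (p : DiskSeq E) : ℝ := ∑' n, penalty (p.holeRadius n)

/-- The significant index set, as in `SwissCheese.sig`. -/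
def sig (p : DiskSeq E) : Set ℕ := {n | 1 ≤ n ∧ 0 < (p n).2}

/-- Annularity, as in `SwissCheese.IsAnnular`. -/
def IsAnnular (p : DiskSeq E) : Prop := (p 0).1 = (p 1).1 ∧ (p 1).2 < (p 0).2 ∧ 0 < (p 1).2

/-- The sequence `q` with disk `l` shrunk to radius `0` and disk `k` replaced by `d`. -/
def merge (q : DiskSeq E) (k l : ℕ) (d : E × ℝ) : DiskSeq E :=
  Function.update (Function.update q l ((q l).1, 0)) k d

variable [PseudoMetricSpace E]

/-- The Swiss cheese set, as in `SwissCheese.cheeseSet`. -/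
def cheeseSet (p : DiskSeq E) : Set E :=
  closedBall (p 0).1 (p 0).2 \ ⋃ n ∈ Ici 1, ball (p n).1 (p n).2

/-- Classicality, as in `SwissCheese.IsClassical`. -/
def IsClassical (p : DiskSeq E) : Prop :=
  (Summable fun n => (p (n + 1)).2) ∧ 0 < (p 0).2 ∧ ∀ k ∈ p.sig,
    closedBall (p k).1 (p k).2 ⊆ ball (p 0).1 (p 0).2 ∧
    ∀ l ∈ p.sig, l ≠ k → closedBall (p k).1 (p k).2 ∩ closedBall (p l).1 (p l).2 = ∅

/-- The disk `d` misses the outer disk of `q`, or is contained in one of the disks `1, …, n` of `q`;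
both are expressed by inequalities between the centres and radii. The bound `n` on the index makes
this a closed condition on `q`. -/
def Absorbs (q : DiskSeq E) (n : ℕ) (d : E × ℝ) : Prop :=
  (q 0).2 + d.2 ≤ dist d.1 (q 0).1 ∨ ∃ k ∈ Icc 1 n, dist d.1 (q k).1 + d.2 ≤ (q k).2

/-- `q` has the same outer centre as `p`, a smaller outer disk, and absorbs every other disk
of `p`. -/
def Refines (q p : DiskSeq E) : Prop :=
  (q 0).1 = (p 0).1 ∧ (q 0).2 ≤ (p 0).2 ∧ ∀ n ≥ 1, q.Absorbs n (p n)

/-- The competitors `q` in the minimisation problem attached to `p`. The bound on the centres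
serves compactness only. -/
structure IsAdmissible (p q : DiskSeq E) : Prop where
  center_one : (q 1).1 = (q 0).1
  radius_nonneg : ∀ n, 0 ≤ (q n).2
  summable : Summable q.holeRadius
  annDisc_le : p.annDisc ≤ q.annDisc
  dist_le : ∀ n, dist (q n).1 (q 0).1 ≤ 2 * (p 0).2
  refines : q.Refines p

/-- The sequence `p` with every disk that misses the outer disk replaced by the point `(p 0).1`. -/
noncomputable def trim (p : DiskSeq E) : DiskSeq E :=
  fun n => if (p 0).2 + (p n).2 ≤ dist (p n).1 (p 0).1 then ((p 0).1, 0) else p n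

end Definitions

section Radii

variable {E : Type*} {p q : DiskSeq E}

theorem annDisc_le_sub_holeRadius (hnonneg : ∀ n, 0 ≤ (q n).2) (hsum : Summable q.holeRadius)
    (n : ℕ) : q.annDisc ≤ (q 0).2 - (q 1).2 - 2 * q.holeRadius n := by
  have hle : q.holeRadius n ≤ ∑' i, q.holeRadius i := hsum.le_tsum n fun i _ => hnonneg (i + 2)
  unfold annDisc
  linarith

theorem radius_one_lt_radius_zero (hnonneg : ∀ n, 0 ≤ (q n).2) (hsum : Summable q.holeRadius)
    (hpos : 0 < q.annDisc) : (q 1).2 < (q 0).2 := by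
  linarith [annDisc_le_sub_holeRadius hnonneg hsum 0, hnonneg 2]

theorem radius_le_radius_zero (hnonneg : ∀ n, 0 ≤ (q n).2) (hsum : Summable q.holeRadius)
    (hpos : 0 ≤ q.annDisc) : ∀ n, (q n).2 ≤ (q 0).2
  | 0 => le_rfl
  | 1 => by linarith [annDisc_le_sub_holeRadius hnonneg hsum 0, hnonneg 2]
  | n + 2 => by linarith [annDisc_le_sub_holeRadius hnonneg hsum n, hnonneg 1, hnonneg (n + 2)]

theorem summable_and_le_annDisc_iff (hnonneg : ∀ n, 0 ≤ (q n).2) {δ : ℝ} :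
    Summable q.holeRadius ∧ δ ≤ q.annDisc ↔
      ∀ N, ∑ i ∈ Finset.range N, q.holeRadius i ≤ ((q 0).2 - (q 1).2 - δ) / 2 := by
  have hhole : ∀ n, 0 ≤ q.holeRadius n := fun n => hnonneg (n + 2)
  unfold annDisc
  constructor
  · rintro ⟨hsum, hδ⟩ N
    linarith [hsum.sum_le_tsum (Finset.range N) fun i _ => hhole i]
  · intro hbound
    exact ⟨summable_of_sum_range_le hhole hbound,
      by linarith [Real.tsum_le_of_sum_range_le hhole hbound]⟩

theorem summable_penalty_holeRadius (hnonneg : ∀ n, 0 ≤ (q n).2) (hsum : Summable q.holeRadius) :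
    Summable fun n => penalty (q.holeRadius n) :=
  hsum.of_nonneg_of_le (fun n => penalty_nonneg (hnonneg (n + 2))) fun _ => penalty_le_self _

end Radii

section Refinement

variable {E : Type*} [PseudoMetricSpace E] {p q s : DiskSeq E}

theorem Absorbs.mono_of_refines {n : ℕ} {d : E × ℝ} (h : q.Absorbs n d) (hsq : s.Refines q) :
    s.Absorbs n d := by
  obtain ⟨hcenter, hradius, habs⟩ := hsq
  rcases h with hout | ⟨k, ⟨hk, hkn⟩, hin⟩
  · left
    rw [hcenter]
    linarith
  · rcases habs k hk with hout | ⟨j, ⟨hj, hjk⟩, hin'⟩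
    · left
      linarith [dist_triangle_left (q k).1 (s 0).1 d.1]
    · exact .inr ⟨j, ⟨hj, hjk.trans hkn⟩, by linarith [dist_triangle d.1 (q k).1 (s j).1]⟩

theorem Refines.trans (hsq : s.Refines q) (hqp : q.Refines p) : s.Refines p :=
  ⟨hsq.1.trans hqp.1, hsq.2.1.trans hqp.2.1, fun n hn => (hqp.2.2 n hn).mono_of_refines hsq⟩

theorem Refines.cheeseSet_subset (hqp : q.Refines p) : q.cheeseSet ⊆ p.cheeseSet := by
  obtain ⟨hcenter, hradius, habs⟩ := hqp
  rintro x ⟨hx, hxq⟩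
  simp only [mem_iUnion, not_exists, mem_ball] at hxq
  rw [mem_closedBall] at hx
  refine ⟨?_, ?_⟩
  · rw [← hcenter]
    exact hx.trans hradius
  · simp only [mem_iUnion, not_exists, mem_ball]
    intro n hn hxn
    rcases habs n hn with hout | ⟨k, ⟨hk, -⟩, hin⟩
    · linarith [dist_triangle_left (p n).1 (q 0).1 x]
    · exact hxq k hk (by linarith [dist_triangle x (p n).1 (q k).1])

end Refinement

section Compactness

variable {E : Type*}

theorem isClosed_setOf_absorbs [PseudoMetricSpace E] (n : ℕ) (d : E × ℝ) :
    IsClosed {q : DiskSeq E | q.Absorbs n d} := by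
  have heq : {q : DiskSeq E | q.Absorbs n d} = {q | (q 0).2 + d.2 ≤ dist d.1 (q 0).1} ∪
      ⋃ k ∈ Icc 1 n, {q | dist d.1 (q k).1 + d.2 ≤ (q k).2} := by
    ext q
    simp [Absorbs]
  rw [heq]
  exact (isClosed_le (by fun_prop) (by fun_prop)).union
    ((finite_Icc 1 n).isClosed_biUnion fun k _ => isClosed_le (by fun_prop) (by fun_prop))

variable [MetricSpace E]

theorem isClosed_setOf_refines (p : DiskSeq E) : IsClosed {q : DiskSeq E | q.Refines p} := by
  simp only [Refines, ofPred_and, ofPred_forall]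
  exact (isClosed_eq (by fun_prop) (by fun_prop)).inter
    ((isClosed_le (by fun_prop) (by fun_prop)).inter
      (isClosed_iInter fun n => isClosed_iInter fun _ => isClosed_setOf_absorbs n (p n)))

theorem isClosed_setOf_isAdmissible (p : DiskSeq E) : IsClosed {q | IsAdmissible p q} := by
  have heq : {q | IsAdmissible p q} = {q : DiskSeq E | (q 1).1 = (q 0).1 ∧ (∀ n, 0 ≤ (q n).2) ∧
      (∀ N, ∑ i ∈ Finset.range N, q.holeRadius i ≤ ((q 0).2 - (q 1).2 - p.annDisc) / 2) ∧
      (∀ n, dist (q n).1 (q 0).1 ≤ 2 * (p 0).2) ∧ q.Refines p} := by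
    ext q
    constructor
    · rintro ⟨hcenter, hnonneg, hsum, hdisc, hdist, href⟩
      exact ⟨hcenter, hnonneg, (summable_and_le_annDisc_iff hnonneg).1 ⟨hsum, hdisc⟩, hdist, href⟩
    · rintro ⟨hcenter, hnonneg, hbound, hdist, href⟩
      obtain ⟨hsum, hdisc⟩ := (summable_and_le_annDisc_iff hnonneg).2 hbound
      exact ⟨hcenter, hnonneg, hsum, hdisc, hdist, href⟩
  rw [heq]
  simp only [ofPred_and, ofPred_forall]
  exact (isClosed_eq (by fun_prop) (by fun_prop)).inter
    ((isClosed_iInter fun n => isClosed_le (by fun_prop) (by fun_prop)).inter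
      ((isClosed_iInter fun N => isClosed_le (by fun_prop) (by fun_prop)).inter
        ((isClosed_iInter fun n => isClosed_le (by fun_prop) (by fun_prop)).inter
          (isClosed_setOf_refines p))))

theorem isCompact_setOf_isAdmissible [ProperSpace E] {p : DiskSeq E} (hpos : 0 ≤ p.annDisc) :
    IsCompact {q | IsAdmissible p q} := by
  have hbox : IsCompact (univ.pi fun _ : ℕ =>
      closedBall (p 0).1 (2 * (p 0).2) ×ˢ Icc (0 : ℝ) (p 0).2) :=
    isCompact_univ_pi fun _ => (isCompact_closedBall _ _).prod isCompact_Icc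
  refine hbox.of_isClosed_subset (isClosed_setOf_isAdmissible p) fun q hq n _ => ⟨?_, ?_⟩
  · rw [mem_closedBall, ← hq.refines.1]
    exact hq.dist_le n
  · exact ⟨hq.radius_nonneg n, (radius_le_radius_zero hq.radius_nonneg hq.summable
      (hpos.trans hq.annDisc_le) n).trans hq.refines.2.1⟩

end Compactness

section Trim

variable {E : Type*} [PseudoMetricSpace E] {p : DiskSeq E}

theorem trim_of_dist_lt {n : ℕ} (h : dist (p n).1 (p 0).1 < (p 0).2 + (p n).2) :
    p.trim n = p n :=
  if_neg h.not_ge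

theorem trim_of_le_dist {n : ℕ} (h : (p 0).2 + (p n).2 ≤ dist (p n).1 (p 0).1) :
    p.trim n = ((p 0).1, 0) :=
  if_pos h

theorem trim_radius_nonneg (hnonneg : ∀ n, 0 ≤ (p n).2) (n : ℕ) : 0 ≤ (p.trim n).2 := by
  rcases le_or_gt ((p 0).2 + (p n).2) (dist (p n).1 (p 0).1) with h | h
  · rw [trim_of_le_dist h]
  · rw [trim_of_dist_lt h]
    exact hnonneg n

theorem trim_radius_le (hnonneg : ∀ n, 0 ≤ (p n).2) (n : ℕ) : (p.trim n).2 ≤ (p n).2 := by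
  rcases le_or_gt ((p 0).2 + (p n).2) (dist (p n).1 (p 0).1) with h | h
  · rw [trim_of_le_dist h]
    exact hnonneg n
  · rw [trim_of_dist_lt h]

theorem trim_zero (hpos : 0 < (p 0).2) : p.trim 0 = p 0 :=
  trim_of_dist_lt (by rw [dist_self]; linarith)

theorem trim_refines (hpos : 0 < (p 0).2) : p.trim.Refines p := by
  refine ⟨by rw [trim_zero hpos], by rw [trim_zero hpos], fun n hn => ?_⟩
  rcases le_or_gt ((p 0).2 + (p n).2) (dist (p n).1 (p 0).1) with h | h
  · left
    rwa [trim_zero hpos]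
  · exact .inr ⟨n, ⟨hn, le_rfl⟩, by rw [trim_of_dist_lt h, dist_self, zero_add]⟩

theorem isAdmissible_trim (hnonneg : ∀ n, 0 ≤ (p n).2) (hann : p.IsAnnular)
    (hsum : Summable p.holeRadius) (hpos : 0 ≤ p.annDisc) : IsAdmissible p p.trim := by
  obtain ⟨hcenter, hlt, hone⟩ := hann
  have hzero : p.trim 0 = p 0 := trim_zero (hone.trans hlt)
  have hinner : p.trim 1 = p 1 :=
    trim_of_dist_lt (by rw [hcenter, dist_self]; linarith)
  have hsum' : Summable p.trim.holeRadius :=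
    hsum.of_nonneg_of_le (fun n => trim_radius_nonneg hnonneg (n + 2))
      fun n => trim_radius_le hnonneg (n + 2)
  refine ⟨by rw [hzero, hinner, hcenter], trim_radius_nonneg hnonneg, hsum', ?_, fun n => ?_,
    trim_refines (hone.trans hlt)⟩
  · have hle : ∑' n, p.trim.holeRadius n ≤ ∑' n, p.holeRadius n :=
      hsum'.tsum_le_tsum (fun n => trim_radius_le hnonneg (n + 2)) hsum
    unfold annDisc
    rw [hzero, hinner]
    linarith
  · rw [hzero]
    rcases le_or_gt ((p 0).2 + (p n).2) (dist (p n).1 (p 0).1) with h | h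
    · rw [trim_of_le_dist h, dist_self]
      linarith
    · rw [trim_of_dist_lt h]
      linarith [radius_le_radius_zero hnonneg hsum hpos n]

end Trim

theorem exists_isMinOn_size {E : Type*} [MetricSpace E] [ProperSpace E] {p : DiskSeq E}
    (hnonneg : ∀ n, 0 ≤ (p n).2) (hann : p.IsAnnular) (hsum : Summable p.holeRadius)
    (hpos : 0 ≤ p.annDisc) : ∃ q, IsAdmissible p q ∧ IsMinOn size {s | IsAdmissible p s} q :=
  exists_isMinOn_tsum (isCompact_setOf_isAdmissible hpos)
    ⟨p.trim, isAdmissible_trim hnonneg hann hsum hpos⟩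
    (fun _ => (continuous_penalty.comp (by fun_prop)).continuousOn)
    (fun _ hq n => penalty_nonneg (hq.radius_nonneg (n + 2)))
    (fun _ hq => summable_penalty_holeRadius hq.radius_nonneg hq.summable)

section Merge

variable {E : Type*} {q : DiskSeq E} {k l : ℕ} {d : E × ℝ}

theorem merge_left : q.merge k l d k = d :=
  Function.update_self ..

theorem merge_right (hkl : k ≠ l) : q.merge k l d l = ((q l).1, 0) := by
  rw [merge, Function.update_of_ne hkl.symm, Function.update_self]

theorem merge_of_ne {n : ℕ} (hk : n ≠ k) (hl : n ≠ l) : q.merge k l d n = q n := by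
  rw [merge, Function.update_of_ne hk, Function.update_of_ne hl]

theorem holeRadius_merge_of_lt_two (hk : k < 2) :
    (q.merge k (l + 2) d).holeRadius = Function.update q.holeRadius l 0 := by
  funext n
  have hnk : n + 2 ≠ k := by lia
  rcases eq_or_ne n l with rfl | hnl
  · simp [holeRadius, merge_right hnk.symm]
  · simp [holeRadius, merge_of_ne hnk, hnl]

theorem holeRadius_merge_add_two (hkl : k ≠ l) :
    (q.merge (k + 2) (l + 2) d).holeRadius =
      Function.update (Function.update q.holeRadius l 0) k d.2 := by
  funext n
  rcases eq_or_ne n k with rfl | hnk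
  · simp [holeRadius, merge_left]
  rcases eq_or_ne n l with rfl | hnl
  · simp [holeRadius, merge_right, hkl, hkl.symm]
  · simp [holeRadius, merge_of_ne, hnk, hnl]

theorem hasSum_comp_holeRadius_merge_of_lt_two {f : ℝ → ℝ} (hf : f 0 = 0)
    (hsum : Summable (f ∘ q.holeRadius)) (hk : k < 2) :
    HasSum (f ∘ (q.merge k (l + 2) d).holeRadius)
      (∑' n, f (q.holeRadius n) - f (q.holeRadius l)) := by
  rw [holeRadius_merge_of_lt_two hk, Function.comp_update]
  convert! hsum.hasSum.update l (f 0) using 1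
  simp only [hf, Function.comp_apply]
  ring

theorem hasSum_comp_holeRadius_merge_add_two {f : ℝ → ℝ} (hf : f 0 = 0)
    (hsum : Summable (f ∘ q.holeRadius)) (hkl : k ≠ l) :
    HasSum (f ∘ (q.merge (k + 2) (l + 2) d).holeRadius)
      (∑' n, f (q.holeRadius n) - f (q.holeRadius k) - f (q.holeRadius l) + f d.2) := by
  rw [holeRadius_merge_add_two hkl, Function.comp_update, Function.comp_update]
  convert! (hsum.hasSum.update l (f 0)).update k (f d.2) using 1
  simp only [hf, Function.comp_apply, Function.update_of_ne hkl]
  ring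

theorem summable_holeRadius_merge (hsum : Summable q.holeRadius) (hkl : k ≠ l + 2) :
    Summable (q.merge k (l + 2) d).holeRadius := by
  rcases lt_or_ge k 2 with hk | hk
  · exact (hasSum_comp_holeRadius_merge_of_lt_two (f := id) rfl hsum hk).summable
  · obtain ⟨k, rfl⟩ := Nat.exists_eq_add_of_le' hk
    exact (hasSum_comp_holeRadius_merge_add_two (f := id) rfl hsum (by lia)).summable

theorem annDisc_merge_zero (hsum : Summable q.holeRadius) :
    (q.merge 0 (l + 2) d).annDisc = q.annDisc + (d.2 - (q 0).2) + 2 * q.holeRadius l := by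
  have htsum : ∑' n, (q.merge 0 (l + 2) d).holeRadius n =
      ∑' n, q.holeRadius n - q.holeRadius l :=
    (hasSum_comp_holeRadius_merge_of_lt_two (f := id) rfl hsum two_pos).tsum_eq
  rw [annDisc, htsum, merge_left, merge_of_ne one_ne_zero (by lia), annDisc]
  ring

theorem annDisc_merge_one (hsum : Summable q.holeRadius) :
    (q.merge 1 (l + 2) d).annDisc = q.annDisc - (d.2 - (q 1).2) + 2 * q.holeRadius l := by
  have htsum : ∑' n, (q.merge 1 (l + 2) d).holeRadius n =
      ∑' n, q.holeRadius n - q.holeRadius l :=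
    (hasSum_comp_holeRadius_merge_of_lt_two (f := id) rfl hsum one_lt_two).tsum_eq
  rw [annDisc, htsum, merge_left, merge_of_ne zero_ne_one (by lia), annDisc]
  ring

theorem annDisc_merge_add_two (hsum : Summable q.holeRadius) (hkl : k ≠ l) :
    (q.merge (k + 2) (l + 2) d).annDisc =
      q.annDisc + 2 * (q.holeRadius k + q.holeRadius l - d.2) := by
  have htsum : ∑' n, (q.merge (k + 2) (l + 2) d).holeRadius n =
      ∑' n, q.holeRadius n - q.holeRadius k - q.holeRadius l + d.2 :=
    (hasSum_comp_holeRadius_merge_add_two (f := id) rfl hsum hkl).tsum_eq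
  rw [annDisc, htsum, merge_of_ne (by lia) (by lia), merge_of_ne (by lia) (by lia), annDisc]
  ring

theorem size_merge_lt_of_lt_two (hnonneg : ∀ n, 0 ≤ (q n).2) (hsum : Summable q.holeRadius)
    (hk : k < 2) (hl : 0 < q.holeRadius l) : (q.merge k (l + 2) d).size < q.size := by
  have hsize : (q.merge k (l + 2) d).size = q.size - penalty (q.holeRadius l) :=
    (hasSum_comp_holeRadius_merge_of_lt_two penalty_zero
      (summable_penalty_holeRadius hnonneg hsum) hk).tsum_eq
  linarith [penalty_pos hl]

theorem size_merge_add_two_lt (hnonneg : ∀ n, 0 ≤ (q n).2) (hsum : Summable q.holeRadius)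
    (hkl : k ≠ l) (hk : 0 < q.holeRadius k) (hl : 0 < q.holeRadius l)
    (hd : d.2 = q.holeRadius k + q.holeRadius l) :
    (q.merge (k + 2) (l + 2) d).size < q.size := by
  have hsize : (q.merge (k + 2) (l + 2) d).size =
      q.size - penalty (q.holeRadius k) - penalty (q.holeRadius l) + penalty d.2 :=
    (hasSum_comp_holeRadius_merge_add_two penalty_zero
      (summable_penalty_holeRadius hnonneg hsum) hkl).tsum_eq
  rw [hd] at hsize
  linarith [penalty_add_lt hk hl]

variable [PseudoMetricSpace E]

theorem refines_merge (hk : 1 ≤ k) (hkl : k < l) (hdk : dist (q k).1 d.1 + (q k).2 ≤ d.2)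
    (hdl : dist (q l).1 d.1 + (q l).2 ≤ d.2) : (q.merge k l d).Refines q := by
  have hzero : q.merge k l d 0 = q 0 := merge_of_ne (by lia) (by lia)
  refine ⟨by rw [hzero], by rw [hzero], fun n hn => .inr ?_⟩
  rcases eq_or_ne n k with rfl | hnk
  · exact ⟨n, ⟨hn, le_rfl⟩, by rwa [merge_left]⟩
  rcases eq_or_ne n l with rfl | hnl
  · exact ⟨k, ⟨hk, hkl.le⟩, by rwa [merge_left]⟩
  · exact ⟨n, ⟨hn, le_rfl⟩, by rw [merge_of_ne hnk hnl, dist_self, zero_add]⟩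

theorem refines_merge_zero (hd : d.1 = (q 0).1) (hle : d.2 ≤ (q 0).2)
    (hl : d.2 + (q l).2 ≤ dist (q l).1 (q 0).1) : (q.merge 0 l d).Refines q := by
  refine ⟨by rw [merge_left, hd], by rwa [merge_left], fun n hn => ?_⟩
  rcases eq_or_ne n l with rfl | hnl
  · left
    rwa [merge_left, hd]
  · exact .inr ⟨n, ⟨hn, le_rfl⟩, by rw [merge_of_ne (by lia) hnl, dist_self, zero_add]⟩

theorem IsAdmissible.merge {p : DiskSeq E} (hq : IsAdmissible p q) (hkl : k ≠ l + 2)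
    (hradius : 0 ≤ d.2) (hcenter : k = 1 → d.1 = (q 0).1)
    (hdist : dist d.1 (q 0).1 ≤ 2 * (p 0).2)
    (hdisc : q.annDisc ≤ (q.merge k (l + 2) d).annDisc)
    (href : (q.merge k (l + 2) d).Refines q) : IsAdmissible p (q.merge k (l + 2) d) where
  center_one := by
    rw [href.1]
    rcases eq_or_ne 1 k with rfl | hk
    · rw [merge_left, hcenter rfl]
    · rw [merge_of_ne hk (by lia), hq.center_one]
  radius_nonneg n := by
    rcases eq_or_ne n k with rfl | hnk
    · rwa [merge_left]
    rcases eq_or_ne n (l + 2) with rfl | hnl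
    · rw [merge_right hkl]
    · rw [merge_of_ne hnk hnl]
      exact hq.radius_nonneg n
  summable := summable_holeRadius_merge hq.summable hkl
  annDisc_le := hq.annDisc_le.trans hdisc
  dist_le n := by
    rw [href.1]
    rcases eq_or_ne n k with rfl | hnk
    · rwa [merge_left]
    rcases eq_or_ne n (l + 2) with rfl | hnl
    · rw [merge_right hkl]
      exact hq.dist_le _
    · rw [merge_of_ne hnk hnl]
      exact hq.dist_le n
  refines := href.trans hq.refines

end Merge

section Minimiser

variable {E : Type*}

section PseudoMetricSpace

variable [PseudoMetricSpace E] {p q : DiskSeq E}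

theorem IsAdmissible.annDisc_pos (hq : IsAdmissible p q) (hpos : 0 < p.annDisc) : 0 < q.annDisc :=
  hpos.trans_le hq.annDisc_le

theorem IsAdmissible.radius_zero_nonneg (hq : IsAdmissible p q) : 0 ≤ (p 0).2 :=
  (hq.radius_nonneg 0).trans hq.refines.2.1

theorem IsAdmissible.isAnnular (hq : IsAdmissible p q) (hann : p.IsAnnular)
    (hpos : 0 < p.annDisc) : q.IsAnnular := by
  refine ⟨hq.center_one.symm,
    radius_one_lt_radius_zero hq.radius_nonneg hq.summable (hq.annDisc_pos hpos), ?_⟩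
  rcases hq.refines.2.2 1 le_rfl with hout | ⟨k, hk, hin⟩
  · rw [hq.refines.1, hann.1, dist_self] at hout
    linarith [hq.radius_nonneg 0, hann.2.2]
  · obtain rfl : k = 1 := le_antisymm hk.2 hk.1
    linarith [hann.2.2, dist_nonneg (x := (p 1).1) (y := (q 1).1)]

theorem IsAdmissible.dist_add_holeRadius_lt (hq : IsAdmissible p q) (hpos : 0 < p.annDisc)
    (hmin : IsMinOn size {s | IsAdmissible p s} q) {l : ℕ} (hl : 0 < q.holeRadius l) :
    dist (q (l + 2)).1 (q 0).1 + q.holeRadius l < (q 0).2 := by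
  by_contra! hmeets
  have hbound := annDisc_le_sub_holeRadius hq.radius_nonneg hq.summable l
  have hshrunk : IsAdmissible p (q.merge 0 (l + 2) ((q 0).1, (q 0).2 - 2 * q.holeRadius l)) := by
    refine hq.merge (by lia) ?_ (fun _ => rfl) ?_ ?_ (refines_merge_zero rfl ?_ ?_)
    · linarith [hq.annDisc_pos hpos, hq.radius_nonneg 1]
    · linarith [dist_self (q 0).1, hq.radius_zero_nonneg]
    · rw [annDisc_merge_zero hq.summable]
      linarith
    · linarith
    · linarith
  exact (isMinOn_iff.1 hmin _ hshrunk).not_gt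
    (size_merge_lt_of_lt_two hq.radius_nonneg hq.summable two_pos hl)

theorem IsAdmissible.radius_one_add_holeRadius_lt (hq : IsAdmissible p q)
    (hmin : IsMinOn size {s | IsAdmissible p s} q) {l : ℕ} (hl : 0 < q.holeRadius l) :
    (q 1).2 + q.holeRadius l < dist (q 1).1 (q (l + 2)).1 := by
  by_contra! hmeets
  have hgrown : IsAdmissible p (q.merge 1 (l + 2) ((q 1).1, (q 1).2 + 2 * q.holeRadius l)) := by
    refine hq.merge (by lia) ?_ (fun _ => hq.center_one) (hq.dist_le 1) ?_
      (refines_merge le_rfl (by lia) ?_ ?_)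
    · linarith [hq.radius_nonneg 1]
    · rw [annDisc_merge_one hq.summable]
      linarith
    · linarith [dist_self (q 1).1]
    · linarith [dist_comm (q 1).1 (q (l + 2)).1]
  exact (isMinOn_iff.1 hmin _ hgrown).not_gt
    (size_merge_lt_of_lt_two hq.radius_nonneg hq.summable one_lt_two hl)

theorem IsAdmissible.closedBall_subset_ball (hq : IsAdmissible p q) (hpos : 0 < p.annDisc)
    (hmin : IsMinOn size {s | IsAdmissible p s} q) :
    ∀ k ∈ q.sig, closedBall (q k).1 (q k).2 ⊆ ball (q 0).1 (q 0).2
  | 0, hk => absurd hk.1 (by lia)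
  | 1, _ => by
    rw [hq.center_one]
    exact Metric.closedBall_subset_ball
      (radius_one_lt_radius_zero hq.radius_nonneg hq.summable (hq.annDisc_pos hpos))
  | k + 2, hk => closedBall_subset_ball' (by linarith [hq.dist_add_holeRadius_lt hpos hmin hk.2])

end PseudoMetricSpace

variable [NormedAddCommGroup E] [NormedSpace ℝ E] {p q : DiskSeq E}

theorem IsAdmissible.holeRadius_add_lt_dist (hq : IsAdmissible p q) (hpos : 0 < p.annDisc)
    (hmin : IsMinOn size {s | IsAdmissible p s} q) {k l : ℕ} (hkl : k < l)
    (hk : 0 < q.holeRadius k) (hl : 0 < q.holeRadius l) :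
    q.holeRadius k + q.holeRadius l < dist (q (k + 2)).1 (q (l + 2)).1 := by
  by_contra! hmeets
  obtain ⟨e, hek, hel⟩ := exists_dist_le_le hl.le hk.le hmeets
  have hcenter : dist e (q 0).1 ≤ 2 * (p 0).2 := by
    linarith [dist_triangle_left e (q 0).1 (q (k + 2)).1, hq.refines.2.1,
      hq.dist_add_holeRadius_lt hpos hmin hk, hq.dist_add_holeRadius_lt hpos hmin hl,
      dist_nonneg (x := (q (l + 2)).1) (y := (q 0).1)]
  have hfused : IsAdmissible p
      (q.merge (k + 2) (l + 2) (e, q.holeRadius k + q.holeRadius l)) := by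
    refine hq.merge (by lia) (add_pos hk hl).le (by lia) hcenter ?_
      (refines_merge (by lia) (by lia) ?_ ?_)
    · rw [annDisc_merge_add_two hq.summable hkl.ne]
      linarith
    · linarith
    · linarith [dist_comm e (q (l + 2)).1]
  exact (isMinOn_iff.1 hmin _ hfused).not_gt
    (size_merge_add_two_lt hq.radius_nonneg hq.summable hkl.ne hk hl rfl)

theorem IsAdmissible.disjoint_closedBall_of_lt (hq : IsAdmissible p q) (hpos : 0 < p.annDisc)
    (hmin : IsMinOn size {s | IsAdmissible p s} q) {k l : ℕ} (hk : k ∈ q.sig) (hl : l ∈ q.sig)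
    (hkl : k < l) : Disjoint (closedBall (q k).1 (q k).2) (closedBall (q l).1 (q l).2) := by
  obtain ⟨l, rfl⟩ : ∃ l', l = l' + 2 := Nat.exists_eq_add_of_le' (hk.1.trans_lt hkl)
  apply closedBall_disjoint_closedBall
  match k, hk, hkl with
  | 0, hk, _ => exact absurd hk.1 (by lia)
  | 1, _, _ => exact hq.radius_one_add_holeRadius_lt hmin hl.2
  | k + 2, hk, hkl => exact hq.holeRadius_add_lt_dist hpos hmin (by lia) hk.2 hl.2

theorem IsAdmissible.isClassical (hq : IsAdmissible p q) (hpos : 0 < p.annDisc)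
    (hmin : IsMinOn size {s | IsAdmissible p s} q) : q.IsClassical := by
  refine ⟨(summable_nat_add_iff (f := fun n => (q (n + 1)).2) 1).1 hq.summable, ?_,
    fun k hk => ⟨hq.closedBall_subset_ball hpos hmin k hk, fun l hl hlk => ?_⟩⟩
  · exact (hq.radius_nonneg 1).trans_lt
      (radius_one_lt_radius_zero hq.radius_nonneg hq.summable (hq.annDisc_pos hpos))
  · rw [← disjoint_iff_inter_eq_empty]
    rcases hlk.lt_or_gt with hlt | hgt
    · exact (hq.disjoint_closedBall_of_lt hpos hmin hl hk hlt).symm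
    · exact hq.disjoint_closedBall_of_lt hpos hmin hk hl hgt

end Minimiser

end DiskSeq

theorem stmt_10_general {E : Type*} [NormedAddCommGroup E] [NormedSpace ℝ E] [ProperSpace E]
    (p : DiskSeq E) (hnonneg : ∀ n, 0 ≤ (p n).2) (hann : p.IsAnnular)
    (hsum : Summable p.holeRadius) (hpos : 0 < p.annDisc) :
    ∃ q : DiskSeq E, (∀ n, 0 ≤ (q n).2) ∧ q.IsClassical ∧ q.IsAnnular ∧ (q 0).1 = (p 0).1 ∧
      p.annDisc ≤ q.annDisc ∧ q.cheeseSet ⊆ p.cheeseSet := by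
  obtain ⟨q, hq, hmin⟩ := DiskSeq.exists_isMinOn_size hnonneg hann hsum hpos.le
  exact ⟨q, hq.radius_nonneg, hq.isClassical hpos hmin, hq.isAnnular hann hpos, hq.refines.1,
    hq.annDisc_le, hq.refines.cheeseSet_subset⟩

/-- Annular classicalisation theorem: if `A` is annular with `δ_ann(A) > 0`
(in particular `∑_{n ≥ 2} r_n < ∞`), then there is a classical, annular abstract Swiss
cheese `B` with `b₀ = a₀`, `δ_ann(B) ≥ δ_ann(A)` and `X_B ⊆ X_A`. -/
theorem stmt_10 (A : SwissCheese) (hann : A.IsAnnular)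
    (hsum : Summable fun n => A.r (n + 2)) (hpos : 0 < A.annDisc) :
    ∃ B : SwissCheese, B.IsClassical ∧ B.IsAnnular ∧ B.a 0 = A.a 0 ∧
      A.annDisc ≤ B.annDisc ∧ B.cheeseSet ⊆ A.cheeseSet := by
  obtain ⟨q, hnonneg, hq⟩ :=
    stmt_10_general (fun n => (A.a n, A.r n)) A.r_nonneg hann hsum hpos
  exact ⟨⟨fun n => (q n).1, fun n => (q n).2, hnonneg⟩, hq⟩
end

section
/- Let b ∈ ℂ, let s_0 > s_1 ≥ 0 and let ε > 0. Then there exists a classical abstract Swiss cheese A = ((a_n, r_n)) with a_0 = a_1 = b, r_0 = s_0, r_1 = s_1 and ∑_{n ≥ 2} r_n < ε, such that R(X_A) is regular. -/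
open Metric Set

/-- `R₀(X)`: the restrictions to `X` of rational functions with poles off `X`, i.e. quotients
`p/q` of complex polynomials with `q` nonvanishing on `X`. -/
def R0set (X : Set ℂ) : Set C(X, ℂ) :=
  {f | ∃ p q : Polynomial ℂ, (∀ x : X, q.eval (x : ℂ) ≠ 0) ∧
    ∀ x : X, f x = p.eval (x : ℂ) / q.eval (x : ℂ)}

/-- `R(X)`: the uniform closure in `C(X, ℂ)` of the rational functions with poles off `X`.
(On the compact space `X` the topology of `C(X, ℂ)` is that of uniform convergence.) -/
noncomputable def Rx (X : Set ℂ) [CompactSpace X] : Subalgebra ℂ C(X, ℂ) :=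
  (Algebra.adjoin ℂ (R0set X)).topologicalClosure

/-- A bounded point derivation on `R(X)` at `x`: a continuous linear functional `d` on `R(X)`
satisfying `d(fg) = f(x)d(g) + d(f)g(x)` for all `f, g ∈ R(X)`. -/
def IsBPD (X : Set ℂ) [CompactSpace X] (x : X) (d : Rx X →L[ℂ] ℂ) : Prop :=
  ∀ f g : Rx X, d (f * g) = (f : C(X, ℂ)) x * d g + d f * (g : C(X, ℂ)) x

/-- `R(X)` is regular: for every closed `E ⊆ X` and `x ∈ X ∖ E` there is `f ∈ R(X)` with
`f(x) = 1` and `f ≡ 0` on `E`. -/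
def RxRegular (X : Set ℂ) [CompactSpace X] : Prop :=
  ∀ E : Set X, IsClosed E → ∀ x : X, x ∉ E →
    ∃ f ∈ Rx X, f x = 1 ∧ ∀ y ∈ E, f y = 0

open Metric Set

/-!
For a direction `d ∈ {1, I, -1, -I}` and rational numbers `q < q'` we look for a function in
`R(X_A)` that vanishes where `q' ≤ re (d * z)` and has no zero where `re (d * z) ≤ q`. Products of
four such functions, one for each direction, show that `R(X_A)` is regular.

Such a function is the limit of products of walls `(1 - exp (2 * π / δ * (d * z - c)))⁻¹`. The
poles of a wall are spaced by `δ` along a line. As `δ → 0`, the wall tends to `1` on one side of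
that line and to `0` on the other, whereas holes of radius `κ * δ` about the poles have a total
radius of about `2 * r₀ * κ` and keep the wall bounded by `κ⁻¹`, whatever `δ` is. This allows `κ`
to be fixed for the next wall, which is to stand beyond the present one, before `δ` is chosen for
the present one: then the product is so small there that multiplying it by `κ⁻¹` does no harm.

For the closed disks to be disjoint, every pole has to keep a distance of `κ * δ` from the circles
that are already there, and a pigeonhole argument provides such a position. This `κ` depends on
these circles, and other functions under construction add new ones before the next wall is built.
But the new holes sit on an axis-parallel grid, so some narrower strip for the next wall avoids all
of them by a fixed distance, and `κ` can be kept.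
-/

open Filter Topology Polynomial

/-- Uniform approximability of `f` on `K` by rational functions with poles off `K`, that is,
membership of `f|_K` in `R(K)`. Here `f` is defined on all of `ℂ`, so that passing to a subset of
`K` needs no change of domain. -/
def RationallyApproximableOn (f : ℂ → ℂ) (K : Set ℂ) : Prop :=
  ∀ η : ℝ, 0 < η → ∃ p q : ℂ[X], (∀ z ∈ K, q.eval z ≠ 0) ∧
    ∀ z ∈ K, ‖f z - p.eval z / q.eval z‖ < η

namespace RationallyApproximableOn

variable {f g : ℂ → ℂ} {K L : Set ℂ}

theorem mono (hf : RationallyApproximableOn f K) (hLK : L ⊆ K) :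
    RationallyApproximableOn f L := by
  intro η hη
  obtain ⟨p, q, hq, hpq⟩ := hf η hη
  exact ⟨p, q, fun z hz => hq z (hLK hz), fun z hz => hpq z (hLK hz)⟩

theorem div_polynomial (p : ℂ[X]) {q : ℂ[X]} (hq : ∀ z ∈ K, q.eval z ≠ 0) :
    RationallyApproximableOn (fun z => p.eval z / q.eval z) K :=
  fun η hη => ⟨p, q, hq, fun z _ => by simpa using hη⟩

theorem polynomial (p : ℂ[X]) : RationallyApproximableOn (fun z => p.eval z) K := by
  simpa using div_polynomial (K := K) p (q := 1) (by simp)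

theorem of_tendstoUniformlyOn {ι : Type*} {l : Filter ι} [l.NeBot] {F : ι → ℂ → ℂ}
    (hF : ∀ᶠ i in l, RationallyApproximableOn (F i) K) (hlim : TendstoUniformlyOn F f l K) :
    RationallyApproximableOn f K := by
  intro η hη
  obtain ⟨i, hFi, hi⟩ :=
    (hF.and (Metric.tendstoUniformlyOn_iff.1 hlim (η / 2) (by positivity))).exists
  obtain ⟨p, q, hq, hpq⟩ := hFi (η / 2) (by positivity)
  refine ⟨p, q, hq, fun z hz => ?_⟩
  have hfF : ‖f z - F i z‖ < η / 2 := by simpa only [dist_eq_norm] using hi z hz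
  linarith [norm_sub_le_norm_sub_add_norm_sub (f z) (F i z) (p.eval z / q.eval z), hpq z hz]

theorem exists_seq (hf : RationallyApproximableOn f K) :
    ∃ p q : ℕ → ℂ[X], (∀ n, ∀ z ∈ K, (q n).eval z ≠ 0) ∧
      TendstoUniformlyOn (fun n z => (p n).eval z / (q n).eval z) f atTop K := by
  choose p q hq hpq using fun n : ℕ => hf (1 / (n + 1)) (by positivity)
  refine ⟨p, q, hq, Metric.tendstoUniformlyOn_iff.2 fun η hη => ?_⟩
  filter_upwards [tendsto_one_div_add_atTop_nhds_zero_nat.eventually (gt_mem_nhds hη)]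
    with n hn z hz
  rw [dist_eq_norm]
  exact (hpq n z hz).trans hn

theorem continuousOn (hf : RationallyApproximableOn f K) : ContinuousOn f K := by
  obtain ⟨p, q, hq, hlim⟩ := hf.exists_seq
  exact hlim.continuousOn (Frequently.of_forall fun n =>
    (p n).continuous.continuousOn.div (q n).continuous.continuousOn (hq n))

theorem sub (hf : RationallyApproximableOn f K) (hg : RationallyApproximableOn g K) :
    RationallyApproximableOn (fun z => f z - g z) K := by
  obtain ⟨p, q, hq, hlim⟩ := hf.exists_seq
  obtain ⟨p', q', hq', hlim'⟩ := hg.exists_seq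
  refine of_tendstoUniformlyOn (Eventually.of_forall fun n => ?_) (hlim.fun_sub hlim')
  intro η hη
  refine ⟨p n * q' n - q n * p' n, q n * q' n, fun z hz => ?_, fun z hz => ?_⟩
  · simpa using ⟨hq n z hz, hq' n z hz⟩
  · simpa [div_sub_div _ _ (hq n z hz) (hq' n z hz)] using hη

theorem mul (hK : IsCompact K) (hf : RationallyApproximableOn f K)
    (hg : RationallyApproximableOn g K) : RationallyApproximableOn (fun z => f z * g z) K := by
  obtain ⟨p, q, hq, hlim⟩ := hf.exists_seq
  obtain ⟨p', q', hq', hlim'⟩ := hg.exists_seq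
  refine of_tendstoUniformlyOn (Eventually.of_forall fun n => ?_)
    ((tendstoLocallyUniformlyOn_iff_tendstoUniformlyOn_of_compact hK).1
      (hlim.tendstoLocallyUniformlyOn.fun_mul₀ hlim'.tendstoLocallyUniformlyOn hf.continuousOn
        hg.continuousOn))
  simpa [mul_div_mul_comm] using div_polynomial (p n * p' n) (q := q n * q' n)
    fun z hz => by simpa using ⟨hq n z hz, hq' n z hz⟩

theorem inv (hK : IsCompact K) (hf : RationallyApproximableOn f K) (hf₀ : ∀ z ∈ K, f z ≠ 0) :
    RationallyApproximableOn (fun z => (f z)⁻¹) K := by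
  obtain ⟨p, q, _, hlim⟩ := hf.exists_seq
  obtain ⟨κ, hκ, hκf⟩ : ∃ κ : ℝ, 0 < κ ∧ ∀ z ∈ K, κ ≤ ‖f z‖ :=
    hK.exists_forall_le' hf.continuousOn.norm fun z hz => norm_pos_iff.2 (hf₀ z hz)
  refine of_tendstoUniformlyOn ?_ ((tendstoLocallyUniformlyOn_iff_tendstoUniformlyOn_of_compact
    hK).1 (hlim.tendstoLocallyUniformlyOn.fun_inv₀ hf.continuousOn hf₀))
  filter_upwards [Metric.tendstoUniformlyOn_iff.1 hlim κ hκ] with n hn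
  have hp : ∀ z ∈ K, (p n).eval z ≠ 0 := fun z hz hpz =>
    (hκf z hz).not_gt (by simpa [hpz] using hn z hz)
  simpa only [inv_div] using div_polynomial (q n) hp

theorem cexp_polynomial (hK : IsCompact K) (p : ℂ[X]) :
    RationallyApproximableOn (fun z => Complex.exp (p.eval z)) K := by
  obtain ⟨M, hM⟩ := hK.exists_bound_of_continuousOn p.continuous.continuousOn
  have hlim : TendstoUniformlyOn (fun N z => ∑ n ∈ Finset.range N, p.eval z ^ n / n.factorial)
      (fun z => Complex.exp (p.eval z)) atTop K := by
    simp only [Complex.exp_eq_exp_ℂ, NormedSpace.exp_eq_tsum_div]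
    refine tendstoUniformlyOn_tsum_nat (Real.summable_pow_div_factorial M) fun n z hz => ?_
    rw [norm_div, norm_pow, Complex.norm_natCast]
    gcongr
    exact hM z hz
  refine of_tendstoUniformlyOn (Eventually.of_forall fun N => ?_) hlim
  simpa [eval_finsetSum, mul_comm, div_eq_mul_inv] using
    polynomial (K := K) (∑ n ∈ Finset.range N, C (n.factorial : ℂ)⁻¹ * p ^ n)

theorem exists_mem_Rx {X : Set ℂ} [CompactSpace X] (hf : RationallyApproximableOn f X) :
    ∃ F ∈ Rx X, ∀ x : X, F x = f x := by
  refine ⟨⟨fun x => f x, hf.continuousOn.domRestrict⟩, ?_, fun x => rfl⟩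
  rw [Rx, ← SetLike.mem_coe, Subalgebra.topologicalClosure_coe, Metric.mem_closure_iff]
  intro η hη
  obtain ⟨p, q, hq, hpq⟩ := hf η hη
  let G : C(X, ℂ) := ⟨fun x => p.eval (x : ℂ) / q.eval (x : ℂ),
    (p.continuous.comp continuous_subtype_val).div (q.continuous.comp continuous_subtype_val)
      fun x => hq x x.2⟩
  refine ⟨G, Algebra.subset_adjoin ⟨p, q, fun x => hq x x.2, fun x => rfl⟩, ?_⟩
  rw [ContinuousMap.dist_lt_iff hη]
  exact fun x => (dist_eq_norm (f x) (G x)).trans_lt (hpq x x.2)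

end RationallyApproximableOn

/-! ### Walls of poles -/

section Wall

/-- The `l`-th pole of the wall in direction `d` with base point `c` and spacing `δ`: the map
`z ↦ d * z` carries these poles to the points `c + l * δ * I` of a vertical line. -/
noncomputable def pole (d c : ℂ) (δ : ℝ) (l : ℤ) : ℂ :=
  d⁻¹ * (c + (l * δ : ℝ) * Complex.I)

/-- The meromorphic function with simple poles at the points `pole d c δ l` which, for small `δ`,
is close to the indicator function of the half-plane `{z | re (d * z) < re c}` away from its
boundary line. -/
noncomputable def wall (d c : ℂ) (δ : ℝ) (z : ℂ) : ℂ :=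
  (1 - Complex.exp ((2 * Real.pi / δ : ℝ) * (d * z - c)))⁻¹

variable {d c : ℂ} {δ κ : ℝ}

theorem dist_eq_norm_mul_sub_mul (hd : ‖d‖ = 1) (z w : ℂ) : dist z w = ‖d * z - d * w‖ := by
  rw [← mul_sub, norm_mul, hd, one_mul, dist_eq_norm]

theorem mul_pole (hd : ‖d‖ = 1) (c : ℂ) (δ : ℝ) (l : ℤ) :
    d * pole d c δ l = c + (l * δ : ℝ) * Complex.I :=
  mul_inv_cancel_left₀ (norm_ne_zero_iff.1 (hd ▸ one_ne_zero)) _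

theorem le_dist_pole_pole (hd : ‖d‖ = 1) (c : ℂ) (hδ : 0 ≤ δ) {l l' : ℤ} (hl : l ≠ l') :
    δ ≤ dist (pole d c δ l) (pole d c δ l') := by
  have hdiff : d * pole d c δ l - d * pole d c δ l' = ((l - l' : ℤ) * δ : ℝ) * Complex.I := by
    rw [mul_pole hd, mul_pole hd]
    push_cast
    ring
  have hone : (1 : ℝ) ≤ |((l - l' : ℤ) : ℝ)| := by
    exact_mod_cast Int.one_le_abs (sub_ne_zero.2 hl)
  rw [dist_eq_norm_mul_sub_mul hd, hdiff, norm_mul, Complex.norm_I, mul_one, Complex.norm_real,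
    Real.norm_eq_abs, abs_mul, abs_of_nonneg hδ]
  exact le_mul_of_one_le_left hδ hone

theorem le_norm_one_sub_cexp (hκ : κ ≤ 1 / 2) {w : ℂ}
    (hw : ∀ l : ℤ, 2 * Real.pi * κ ≤ ‖w - l * (2 * Real.pi * Complex.I)‖) :
    κ ≤ ‖1 - Complex.exp w‖ := by
  by_contra! hlt
  have hlog := Complex.norm_log_one_add_half_le_self (z := Complex.exp w - 1)
    (by rw [norm_sub_rev]; linarith)
  rw [add_sub_cancel, norm_sub_rev] at hlog
  obtain ⟨n, hn⟩ := Complex.exp_eq_exp_iff_exists_int.1 (Complex.exp_log (Complex.exp_ne_zero w))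
  have hlow := hw (-n)
  rw [show w - (-n : ℤ) * (2 * Real.pi * Complex.I) = Complex.log (Complex.exp w) by
    rw [hn]; push_cast; ring] at hlow
  nlinarith [Real.pi_gt_three, norm_nonneg (1 - Complex.exp w)]

theorem norm_inv_one_sub_cexp_sub_one_le {w : ℂ} (hw : Real.exp w.re ≤ 1 / 2) :
    ‖(1 - Complex.exp w)⁻¹ - 1‖ ≤ 2 * Real.exp w.re := by
  have hlow : 1 / 2 ≤ ‖1 - Complex.exp w‖ := by
    have := norm_sub_norm_le 1 (Complex.exp w)
    rw [norm_one, Complex.norm_exp] at this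
    linarith
  have hne : 1 - Complex.exp w ≠ 0 := norm_pos_iff.1 (by linarith)
  have hdiv : (1 - Complex.exp w)⁻¹ - 1 = Complex.exp w / (1 - Complex.exp w) := by
    field_simp
    ring
  rw [hdiv, norm_div, Complex.norm_exp, div_le_iff₀ (by linarith)]
  nlinarith [Real.exp_pos w.re]

theorem norm_inv_one_sub_cexp_le {w : ℂ} (hw : Real.exp (-w.re) ≤ 1 / 2) :
    ‖(1 - Complex.exp w)⁻¹‖ ≤ 2 * Real.exp (-w.re) := by
  have hne : Complex.exp w ≠ 1 := by
    intro h
    have hre : Real.exp w.re = 1 := by rw [← Complex.norm_exp, h, norm_one]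
    rw [Real.exp_neg, hre] at hw
    norm_num at hw
  have hsymm : (1 - Complex.exp w)⁻¹ = -((1 - Complex.exp (-w))⁻¹ - 1) := by
    have h₁ : 1 - Complex.exp w ≠ 0 := sub_ne_zero.2 hne.symm
    have h₂ : Complex.exp w - 1 ≠ 0 := sub_ne_zero.2 hne
    rw [Complex.exp_neg]
    field_simp
    ring
  rw [hsymm, norm_neg]
  simpa using norm_inv_one_sub_cexp_sub_one_le (w := -w) (by simpa using hw)

theorem le_norm_one_sub_cexp_of_le_dist_pole (hd : ‖d‖ = 1) (hδ : 0 < δ) (hκ : κ ≤ 1 / 2) {z : ℂ}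
    (hz : ∀ l : ℤ, κ * δ ≤ dist z (pole d c δ l)) :
    κ ≤ ‖1 - Complex.exp ((2 * Real.pi / δ : ℝ) * (d * z - c))‖ := by
  refine le_norm_one_sub_cexp hκ fun l => ?_
  have hshift : ((2 * Real.pi / δ : ℝ) : ℂ) * (d * z - c) - l * (2 * Real.pi * Complex.I) =
      (2 * Real.pi / δ : ℝ) * (d * z - d * pole d c δ l) := by
    have : (δ : ℂ) ≠ 0 := by exact_mod_cast hδ.ne'
    rw [mul_pole hd]
    push_cast
    field_simp
    ring
  rw [hshift, norm_mul, ← dist_eq_norm_mul_sub_mul hd, Complex.norm_real, Real.norm_eq_abs,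
    abs_of_pos (by positivity)]
  calc 2 * Real.pi * κ = 2 * Real.pi / δ * (κ * δ) := by field_simp
    _ ≤ 2 * Real.pi / δ * dist z (pole d c δ l) := by gcongr; exact hz l

theorem norm_wall_le (hd : ‖d‖ = 1) (hδ : 0 < δ) (hκ₀ : 0 < κ) (hκ : κ ≤ 1 / 2) {z : ℂ}
    (hz : ∀ l : ℤ, κ * δ ≤ dist z (pole d c δ l)) : ‖wall d c δ z‖ ≤ κ⁻¹ := by
  rw [wall, norm_inv]
  exact inv_anti₀ hκ₀ (le_norm_one_sub_cexp_of_le_dist_pole hd hδ hκ hz)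

theorem rationallyApproximableOn_wall {K : Set ℂ} (hK : IsCompact K) (hd : ‖d‖ = 1) (hδ : 0 < δ)
    (hκ₀ : 0 < κ) (hκ : κ ≤ 1 / 2) (hKκ : ∀ z ∈ K, ∀ l : ℤ, κ * δ ≤ dist z (pole d c δ l)) :
    RationallyApproximableOn (wall d c δ) K := by
  have hdenom : RationallyApproximableOn
      (fun z => 1 - Complex.exp ((2 * Real.pi / δ : ℝ) * (d * z - c))) K := by
    have hexp := RationallyApproximableOn.cexp_polynomial hK
      (C ((2 * Real.pi / δ : ℝ) : ℂ) * (C d * X - C c))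
    simpa using (RationallyApproximableOn.polynomial 1).sub hexp
  exact hdenom.inv hK fun z hz => norm_pos_iff.1
    (hκ₀.trans_le (le_norm_one_sub_cexp_of_le_dist_pole hd hδ hκ (hKκ z hz)))

theorem eventually_exp_neg_two_pi_div_mul_le {x η : ℝ} (hx : 0 < x) (hη : 0 < η) :
    ∀ᶠ δ : ℝ in 𝓝[>] 0, Real.exp (-(2 * Real.pi / δ * x)) ≤ η := by
  have hatTop : Tendsto (fun δ : ℝ => 2 * Real.pi / δ * x) (𝓝[>] 0) atTop :=
    (tendsto_inv_nhdsGT_zero.const_mul_atTop (by positivity : 0 < 2 * Real.pi * x)).congr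
      fun δ => by ring
  exact ((Real.tendsto_exp_neg_atTop_nhds_zero.comp hatTop).eventually (gt_mem_nhds hη)).mono
    fun _ h => h.le

theorem eventually_norm_wall_sub_one_le (d : ℂ) {x η : ℝ} (hx : 0 < x) (hη : 0 < η) :
    ∀ᶠ δ : ℝ in 𝓝[>] 0, ∀ c z : ℂ, (d * z).re + x ≤ c.re → ‖wall d c δ z - 1‖ ≤ η := by
  filter_upwards [eventually_exp_neg_two_pi_div_mul_le hx (by positivity : 0 < min (1 / 2) (η / 2)),
    self_mem_nhdsWithin] with δ hexp hδ c z hz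
  have hδ : 0 < δ := hδ
  have hre : Real.exp ((2 * Real.pi / δ : ℝ) * (d * z - c)).re ≤ min (1 / 2) (η / 2) := by
    refine le_trans (Real.exp_le_exp.2 ?_) hexp
    rw [Complex.re_ofReal_mul, Complex.sub_re, ← mul_neg]
    gcongr
    linarith
  refine (norm_inv_one_sub_cexp_sub_one_le (hre.trans (min_le_left _ _))).trans ?_
  linarith [hre.trans (min_le_right _ _)]

theorem eventually_norm_wall_le (d : ℂ) {x η : ℝ} (hx : 0 < x) (hη : 0 < η) :
    ∀ᶠ δ : ℝ in 𝓝[>] 0, ∀ c z : ℂ, c.re + x ≤ (d * z).re → ‖wall d c δ z‖ ≤ η := by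
  filter_upwards [eventually_exp_neg_two_pi_div_mul_le hx (by positivity : 0 < min (1 / 2) (η / 2)),
    self_mem_nhdsWithin] with δ hexp hδ c z hz
  have hδ : 0 < δ := hδ
  have hre : Real.exp (-((2 * Real.pi / δ : ℝ) * (d * z - c)).re) ≤ min (1 / 2) (η / 2) := by
    refine le_trans (Real.exp_le_exp.2 (neg_le_neg ?_)) hexp
    rw [Complex.re_ofReal_mul, Complex.sub_re]
    gcongr
    linarith
  refine (norm_inv_one_sub_cexp_le (hre.trans (min_le_left _ _))).trans ?_
  linarith [hre.trans (min_le_right _ _)]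

section NormMulWall

variable {f : ℂ → ℂ} {K : Set ℂ} {x t η : ℝ}

theorem exists_pos_forall_norm_le (hK : IsCompact K) (hf : ContinuousOn f K) :
    ∃ M : ℝ, 0 < M ∧ ∀ z ∈ K, ‖f z‖ ≤ M := by
  obtain ⟨M, hM⟩ := hK.exists_bound_of_continuousOn hf
  exact ⟨max M 1, by positivity, fun z hz => (hM z hz).trans (le_max_left _ _)⟩

theorem eventually_norm_mul_wall_sub_le (hK : IsCompact K) (hf : ContinuousOn f K) (d : ℂ)
    (hxt : x < t) (hη : 0 < η) :
    ∀ᶠ δ : ℝ in 𝓝[>] 0, ∀ c : ℂ, c.re = t → ∀ z ∈ K, (d * z).re ≤ x →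
      ‖f z * wall d c δ z - f z‖ ≤ η := by
  obtain ⟨M, hM, hfM⟩ := exists_pos_forall_norm_le hK hf
  filter_upwards [eventually_norm_wall_sub_one_le d (sub_pos.2 hxt) (div_pos hη hM)]
    with δ hδ c hc z hz hzx
  calc ‖f z * wall d c δ z - f z‖ = ‖f z‖ * ‖wall d c δ z - 1‖ := by rw [← norm_mul, mul_sub_one]
    _ ≤ M * (η / M) := by
        gcongr
        exacts [hfM z hz, hδ c z (by linarith)]
    _ = η := mul_div_cancel₀ η hM.ne'

theorem eventually_norm_mul_wall_le (hK : IsCompact K) (hf : ContinuousOn f K) (d : ℂ)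
    (htx : t < x) (hη : 0 < η) :
    ∀ᶠ δ : ℝ in 𝓝[>] 0, ∀ c : ℂ, c.re = t → ∀ z ∈ K, x ≤ (d * z).re →
      ‖f z * wall d c δ z‖ ≤ η := by
  obtain ⟨M, hM, hfM⟩ := exists_pos_forall_norm_le hK hf
  filter_upwards [eventually_norm_wall_le d (sub_pos.2 htx) (div_pos hη hM)]
    with δ hδ c hc z hz hzx
  calc ‖f z * wall d c δ z‖ = ‖f z‖ * ‖wall d c δ z‖ := norm_mul _ _
    _ ≤ M * (η / M) := by
        gcongr
        exacts [hfM z hz, hδ c z (by linarith)]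
    _ = η := mul_div_cancel₀ η hM.ne'

end NormMulWall

end Wall

/-! ### Good windows -/

/-- A disk in the plane, given by its centre and its radius. -/
abbrev Disk : Type := ℂ × ℝ

/-- Every pole of the wall in direction `d` with base point `c` and spacing `δ` keeps a distance
greater than `κ * δ` from the boundary circles of the disks in `O`. -/
def PolesAvoid (O : Finset Disk) (d c : ℂ) (δ κ : ℝ) : Prop :=
  ∀ l : ℤ, ∀ h ∈ O, κ * δ < |dist (pole d c δ l) h.1 - h.2|

/-- For all sufficiently small spacings `δ`, every position `t` between `lo` and `hi` is the real
part of the base point of a wall in direction `d` avoiding the circles of `O` with relative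
margin `κ`. -/
def IsGoodWindow (O : Finset Disk) (d : ℂ) (lo hi κ : ℝ) : Prop :=
  ∀ᶠ δ in 𝓝[>] 0, ∀ t ∈ Ioo lo hi, ∃ c : ℂ, c.re = t ∧ PolesAvoid O d c δ κ

/-- The ordinates of the points where the vertical line through `t` meets the image of the
boundary circle of `h` under multiplication by `d`. If the line misses the circle, the square root
is `0`, and the value is of no significance. -/
noncomputable def crossings (d : ℂ) (h : Disk) (t : ℝ) : Finset ℝ :=
  {(d * h.1).im + √(h.2 ^ 2 - (t - (d * h.1).re) ^ 2),
    (d * h.1).im - √(h.2 ^ 2 - (t - (d * h.1).re) ^ 2)}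

section GoodWindow

variable {O G : Finset Disk} {d e c : ℂ} {δ κ lo hi : ℝ}

/- Pigeonhole: among the `S.card + 1` equally spaced candidates for `y`, two that are close to
the same class `s + δℤ` would have to coincide modulo `δ`. -/
theorem exists_forall_le_abs_add_int_mul_sub (hδ : 0 < δ) (S : Finset ℝ) :
    ∃ y : ℝ, ∀ s ∈ S, ∀ l : ℤ, δ / (2 * (S.card + 1)) ≤ |y + l * δ - s| := by
  by_contra! hbad
  choose s hs l hl using fun i : ℕ => hbad (i * (δ / (S.card + 1)))
  obtain ⟨i, hi, j, hj, hij, hsij⟩ := Finset.exists_ne_map_eq_of_card_lt_of_maps_to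
    (s := Finset.range (S.card + 1)) (t := S) (f := s) (by simp) fun i _ => hs i
  have hstep : 0 < δ / (S.card + 1) := by positivity
  have hlt : |((i - j + (l i - l j) * (S.card + 1) : ℤ) : ℝ)| < 1 := by
    refine lt_of_mul_lt_mul_right ?_ hstep.le
    calc |((i - j + (l i - l j) * (S.card + 1) : ℤ) : ℝ)| * (δ / (S.card + 1))
        = |(i * (δ / (S.card + 1)) + l i * δ - s i) -
            (j * (δ / (S.card + 1)) + l j * δ - s j)| := by
          rw [← abs_of_pos hstep, ← abs_mul, abs_of_pos hstep, hsij]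
          push_cast
          congr 1
          field_simp
          ring
      _ < δ / (2 * (S.card + 1)) + δ / (2 * (S.card + 1)) :=
          (abs_sub _ _).trans_lt (add_lt_add (hl i) (hl j))
      _ = 1 * (δ / (S.card + 1)) := by field_simp; ring
  have hzero : (i - j + (l i - l j) * (S.card + 1) : ℤ) = 0 :=
    Int.abs_lt_one_iff.1 (by exact_mod_cast hlt)
  have hdvd : (S.card + 1 : ℤ) ∣ i - j := ⟨-(l i - l j), by linarith⟩
  rw [Finset.mem_range] at hi hj
  have := Int.eq_zero_of_abs_lt_dvd hdvd (abs_lt.2 ⟨by omega, by omega⟩)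
  omega

theorem exists_window_forall_le_abs_abs_sub_sub (O : Finset Disk) (d : ℂ) {a b : ℝ}
    (hab : a < b) :
    ∃ lo hi τ : ℝ, a ≤ lo ∧ lo < hi ∧ hi ≤ b ∧ 0 < τ ∧
      ∀ t ∈ Ioo lo hi, ∀ h ∈ O, τ ≤ |(|t - (d * h.1).re| - h.2)| := by
  obtain ⟨t₀, ht₀, hne⟩ := (Ioo_infinite hab).exists_notMem_finset
    (O.biUnion fun h => {(d * h.1).re + h.2, (d * h.1).re - h.2})
  have hpos : ∀ h ∈ O, 0 < |(|t₀ - (d * h.1).re| - h.2)| := by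
    refine fun h hh => abs_pos.2 fun hzero => hne (Finset.mem_biUnion.2 ⟨h, hh, ?_⟩)
    rw [Finset.mem_insert, Finset.mem_singleton]
    rcases abs_cases (t₀ - (d * h.1).re) with ⟨habs, -⟩ | ⟨habs, -⟩
    · left; linarith
    · right; linarith
  have hnear : ∀ᶠ p : ℝ × ℝ in 𝓝[>] 0 ×ˢ 𝓝 t₀, ∀ h ∈ O,
      p.1 < |(|p.2 - (d * h.1).re| - h.2)| := by
    refine (O.eventually_all).2 fun h hh => ?_
    have hcont : Continuous fun t : ℝ => |(|t - (d * h.1).re| - h.2)| := by fun_prop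
    exact (tendsto_nhds_of_tendsto_nhdsWithin tendsto_fst).eventually_lt
      ((hcont.tendsto t₀).comp tendsto_snd) (hpos h hh)
  obtain ⟨τ, hτO, hτ⟩ := (hnear.curry.and self_mem_nhdsWithin).exists
  obtain ⟨lo, hi, hmem, hsub⟩ :=
    mem_nhds_iff_exists_Ioo_subset.1 (hτO.and (Ioo_mem_nhds ht₀.1 ht₀.2))
  have hlohi := hmem.1.trans hmem.2
  have hsub' := (Ioo_subset_Ioo_iff hlohi).1 fun t ht => (hsub ht).2
  exact ⟨lo, hi, τ, hsub'.1, hlohi, hsub'.2, hτ, fun t ht h hh => ((hsub ht).1 h hh).le⟩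

theorem abs_abs_im_sub_sqrt_mul_le {w : ℂ} {R τ m : ℝ} (hτ : 0 ≤ τ) (hre : |w.re| ≤ R - τ)
    (hm : |‖w‖ - R| ≤ m) : |(|w.im| - √(R ^ 2 - w.re ^ 2))| * τ ≤ m * (2 * R + m) := by
  set s := √(R ^ 2 - w.re ^ 2)
  have hRτ : τ ≤ R := by linarith [abs_nonneg w.re]
  have hre_sq : w.re ^ 2 ≤ (R - τ) ^ 2 := sq_le_sq' (by linarith [neg_le_of_abs_le hre])
    (le_of_abs_le hre)
  have hs_sq : s ^ 2 = R ^ 2 - w.re ^ 2 := Real.sq_sqrt (by nlinarith)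
  have hτs : τ ≤ s := Real.le_sqrt_of_sq_le (by nlinarith)
  have hfactor : (|w.im| - s) * (|w.im| + s) = (‖w‖ - R) * (‖w‖ + R) := by
    linear_combination sq_abs w.im - hs_sq - Complex.sq_norm w - Complex.normSq_apply w
  calc |(|w.im| - s)| * τ ≤ |(|w.im| - s)| * (|w.im| + s) := by
        gcongr; linarith [abs_nonneg w.im]
    _ = |‖w‖ - R| * (‖w‖ + R) := by
        rw [← abs_of_nonneg (by positivity : 0 ≤ |w.im| + s), ← abs_mul, hfactor, abs_mul,
          abs_of_nonneg (by linarith [norm_nonneg w] : 0 ≤ ‖w‖ + R)]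
    _ ≤ m * (2 * R + m) := by
        refine mul_le_mul hm ?_ (by linarith [norm_nonneg w]) ((abs_nonneg _).trans hm)
        linarith [le_of_abs_le hm]

theorem exists_mem_crossings_abs_im_sub_mul_le (hd : ‖d‖ = 1) {h : Disk} {p : ℂ} {τ m : ℝ}
    (hτ : τ ≤ |(|(d * p).re - (d * h.1).re| - h.2)|) (hmτ : m < τ)
    (hm : |dist p h.1 - h.2| ≤ m) :
    ∃ s ∈ crossings d h (d * p).re, |(d * p).im - s| * τ ≤ m * (2 * h.2 + m) := by
  rw [dist_eq_norm_mul_sub_mul hd] at hm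
  rw [← Complex.sub_re] at hτ
  set w := d * p - d * h.1
  have hm₀ : 0 ≤ m := (abs_nonneg _).trans hm
  have hre : |w.re| ≤ h.2 - τ := by
    rcases le_abs.1 hτ with hout | hin
    · linarith [Complex.abs_re_le_norm w, le_of_abs_le hm]
    · linarith
  have hbound := abs_abs_im_sub_sqrt_mul_le (by linarith) hre hm
  simp only [crossings, Finset.mem_insert, Finset.mem_singleton, exists_eq_or_imp, exists_eq_left,
    ← Complex.sub_re]
  rcases abs_cases w.im with ⟨him, -⟩ | ⟨him, -⟩
  · left
    rwa [← sub_sub, ← Complex.sub_im, ← him]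
  · right
    rwa [← sub_add, ← Complex.sub_im, ← abs_neg, neg_add, ← him]

theorem exists_polesAvoid (hd : ‖d‖ = 1) {t τ : ℝ}
    (hτ : ∀ h ∈ O, τ ≤ |(|t - (d * h.1).re| - h.2)|) (hδ : 0 < δ) (hκ : 0 ≤ κ) (hκδ : κ * δ ≤ 1)
    (hκδτ : κ * δ < τ) (hκO : ∀ h ∈ O, (2 * h.2 + 1) * (2 * (2 * O.card + 1)) * κ < τ) :
    ∃ c : ℂ, c.re = t ∧ PolesAvoid O d c δ κ := by
  set S := O.biUnion fun h => crossings d h t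
  have hcard : (S.card : ℝ) ≤ 2 * O.card := by
    exact_mod_cast (Finset.card_biUnion_le_card_mul _ _ 2 fun h _ => Finset.card_le_two).trans_eq
      (mul_comm _ _)
  obtain ⟨y, hy⟩ := exists_forall_le_abs_add_int_mul_sub hδ S
  refine ⟨⟨t, y⟩, rfl, fun l h hh => ?_⟩
  by_contra! hclose
  have hmul : d * pole d ⟨t, y⟩ δ l = ⟨t, y + l * δ⟩ := by
    rw [mul_pole hd]
    apply Complex.ext <;> simp
  obtain ⟨s, hs, hsτ⟩ := exists_mem_crossings_abs_im_sub_mul_le hd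
    (by rw [hmul]; exact hτ h hh) hκδτ hclose
  rw [hmul] at hs hsτ
  have hgap := hy s (Finset.mem_biUnion.2 ⟨h, hh, hs⟩) l
  have hτ₀ : 0 < τ := (by positivity : 0 ≤ κ * δ).trans_lt hκδτ
  refine (hκO h hh).not_ge ?_
  have hchain : δ / (2 * (2 * O.card + 1)) * τ ≤ κ * δ * (2 * h.2 + 1) := calc
    _ ≤ |y + l * δ - s| * τ := by gcongr; exact le_trans (by gcongr) hgap
    _ ≤ κ * δ * (2 * h.2 + κ * δ) := hsτ
    _ ≤ κ * δ * (2 * h.2 + 1) := by gcongr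
  rw [div_mul_eq_mul_div, div_le_iff₀ (by positivity)] at hchain
  exact le_of_mul_le_mul_left (by linarith) hδ

theorem eventually_const_mul_lt (C : ℝ) {x : ℝ} (hx : 0 < x) : ∀ᶠ δ in 𝓝[>] 0, C * δ < x :=
  eventually_nhdsWithin_of_eventually_nhds
    ((continuous_const_mul C).tendsto' 0 0 (mul_zero C) |>.eventually (gt_mem_nhds hx))

theorem exists_isGoodWindow (O : Finset Disk) (hd : ‖d‖ = 1) {a b κ₀ : ℝ} (hab : a < b)
    (hκ₀ : 0 < κ₀) :
    ∃ lo hi κ : ℝ, a ≤ lo ∧ lo < hi ∧ hi ≤ b ∧ 0 < κ ∧ κ ≤ κ₀ ∧ IsGoodWindow O d lo hi κ := by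
  obtain ⟨lo, hi, τ, ha, hlohi, hb, hτ, htrans⟩ :=
    exists_window_forall_le_abs_abs_sub_sub O d hab
  obtain ⟨κ, hκO, hκκ₀, hκ⟩ := ((O.eventually_all.2 fun h _ =>
    eventually_const_mul_lt ((2 * h.2 + 1) * (2 * (2 * O.card + 1))) hτ).and
      ((eventually_const_mul_lt 1 hκ₀).and self_mem_nhdsWithin)).exists
  have hκ : 0 < κ := hκ
  refine ⟨lo, hi, κ, ha, hlohi, hb, hκ, by linarith, ?_⟩
  filter_upwards [eventually_const_mul_lt κ one_pos, eventually_const_mul_lt κ hτ,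
    self_mem_nhdsWithin] with δ hδ₁ hδτ hδ t ht
  exact exists_polesAvoid hd (htrans t ht) hδ hκ.le hδ₁.le hδτ hκO

theorem IsGoodWindow.union (hW : IsGoodWindow O e lo hi κ) (he : ‖e‖ = 1) {lo' hi' ρ : ℝ}
    (hlo : lo ≤ lo') (hhi : hi' ≤ hi) (hρ : 0 < ρ)
    (hG : ∀ t ∈ Ioo lo' hi', ∀ g ∈ G, ρ + g.2 ≤ |t - (e * g.1).re|) :
    IsGoodWindow (O ∪ G) e lo' hi' κ := by
  filter_upwards [hW, eventually_const_mul_lt κ hρ] with δ hδ hκδ t ht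
  obtain ⟨c, hct, hc⟩ := hδ t (Ioo_subset_Ioo hlo hhi ht)
  refine ⟨c, hct, fun l g hg => ?_⟩
  rcases Finset.mem_union.1 hg with hg | hg
  · exact hc l g hg
  have hre : |t - (e * g.1).re| ≤ dist (pole e c δ l) g.1 := by
    rw [dist_eq_norm_mul_sub_mul he, mul_pole he]
    refine le_trans (le_of_eq ?_) (Complex.abs_re_le_norm _)
    simp [hct]
  exact (lt_of_lt_of_le hκδ (by linarith [hG t ht g hg])).trans_le (le_abs_self _)

theorem eq_one_or_neg_one_or_I_or_neg_I_of_pow_four_eq_one {u : ℂ} (hu : u ^ 4 = 1) :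
    u = 1 ∨ u = -1 ∨ u = Complex.I ∨ u = -Complex.I := by
  have hsq : (u ^ 2) ^ 2 = 1 ^ 2 := by rw [← pow_mul, hu, one_pow]
  rcases sq_eq_sq_iff_eq_or_eq_neg.1 hsq with h | h
  · have := sq_eq_sq_iff_eq_or_eq_neg.1 (h.trans (one_pow 2).symm)
    tauto
  · have := sq_eq_sq_iff_eq_or_eq_neg.1 (h.trans Complex.I_sq.symm)
    tauto

/- The directions are multiples of a right angle, so the grid of poles projects onto a point or onto
an arithmetic progression. -/
theorem exists_forall_exists_re_mul_pole_eq (hd : d ^ 4 = 1) (he : e ^ 4 = 1) (c : ℂ) (δ : ℝ) :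
    ∃ x : ℝ, ∀ l : ℤ, ∃ k : ℤ, (e * pole d c δ l).re = x + k * δ := by
  have hed : (e * d⁻¹) ^ 4 = 1 := by rw [mul_pow, inv_pow, hd, he, inv_one, one_mul]
  simp only [pole, ← mul_assoc]
  rcases eq_one_or_neg_one_or_I_or_neg_I_of_pow_four_eq_one hed with h | h | h | h <;>
    simp only [h]
  · exact ⟨c.re, fun l => ⟨0, by simp⟩⟩
  · exact ⟨-c.re, fun l => ⟨0, by simp⟩⟩
  · exact ⟨-c.im, fun l => ⟨-l, by simp; ring⟩⟩
  · exact ⟨c.im, fun l => ⟨l, by simp⟩⟩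

theorem exists_window_forall_le_abs_sub_add_int_mul (x : ℝ) (hδ : 0 < δ)
    (hlen : 2 * δ ≤ hi - lo) :
    ∃ lo' hi' : ℝ, lo ≤ lo' ∧ lo' < hi' ∧ hi' ≤ hi ∧
      ∀ t ∈ Ioo lo' hi', ∀ k : ℤ, δ / 4 ≤ |t - (x + k * δ)| := by
  set m : ℤ := ⌈(lo - x) / δ⌉
  have hm : lo ≤ x + m * δ := by
    linarith [(div_le_iff₀ hδ).1 (Int.le_ceil ((lo - x) / δ))]
  have hm' : x + m * δ < lo + δ := by
    linarith [(lt_div_iff₀ hδ).1 (sub_lt_iff_lt_add.2 (Int.ceil_lt_add_one ((lo - x) / δ)))]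
  refine ⟨x + m * δ + δ / 4, x + m * δ + 3 * δ / 4, by linarith, by linarith, by linarith,
    fun t ht k => ?_⟩
  rcases le_or_gt k m with hkm | hmk
  · have : (k : ℝ) * δ ≤ m * δ := by gcongr
    exact le_abs.2 (Or.inl (by linarith [ht.1]))
  · have : ((m : ℝ) + 1) * δ ≤ k * δ := by gcongr; exact_mod_cast hmk
    exact le_abs.2 (Or.inr (by linarith [ht.2]))

theorem IsGoodWindow.exists_union_wall {κ' : ℝ} (hW : IsGoodWindow O e lo hi κ) (hd : d ^ 4 = 1)
    (he : e ^ 4 = 1) (hδ : 0 < δ) (hκ' : κ' ≤ 1 / 8) (hlen : 2 * δ ≤ hi - lo)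
    (hG : ∀ g ∈ G, ∃ l : ℤ, g = (pole d c δ l, κ' * δ)) :
    ∃ lo' hi' : ℝ, lo ≤ lo' ∧ lo' < hi' ∧ hi' ≤ hi ∧ IsGoodWindow (O ∪ G) e lo' hi' κ := by
  obtain ⟨x, hx⟩ := exists_forall_exists_re_mul_pole_eq hd he c δ
  obtain ⟨lo', hi', hlo, hlohi, hhi, hgap⟩ :=
    exists_window_forall_le_abs_sub_add_int_mul x hδ hlen
  refine ⟨lo', hi', hlo, hlohi, hhi, hW.union (Complex.norm_eq_one_of_pow_eq_one he (by norm_num))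
    hlo hhi (by positivity : 0 < δ / 8) fun t ht g hg => ?_⟩
  obtain ⟨l, rfl⟩ := hG g hg
  obtain ⟨k, hk⟩ := hx l
  calc δ / 8 + κ' * δ ≤ δ / 4 := by nlinarith
    _ ≤ |t - (e * pole d c δ l).re| := hk ▸ hgap t ht k

end GoodWindow

/-! ### Holes around the poles of a wall -/

/-- What is left of the closed disk `B` after the open disks in `H` have been removed. -/
def region (B : Disk) (H : Finset Disk) : Set ℂ :=
  closedBall B.1 B.2 \ ⋃ h ∈ H, ball h.1 h.2

/-- The finite form of the geometric conditions on a classical Swiss cheese: the holes `H` are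
nondegenerate, and their closures are pairwise disjoint and contained in the open disk `B`. -/
structure IsAdmissible (B : Disk) (H : Finset Disk) : Prop where
  pos : ∀ h ∈ H, 0 < h.2
  subset_ball : ∀ h ∈ H, closedBall h.1 h.2 ⊆ ball B.1 B.2
  disjoint : ∀ h ∈ H, ∀ g ∈ H, h ≠ g → Disjoint (closedBall h.1 h.2) (closedBall g.1 g.2)

open Classical in
/-- The disks of radius `κ * δ` about the poles of a wall that lie in `region B H`. Only the poles
with index in the given interval can lie in the closed disk `B`. -/
noncomputable def wallHoles (B : Disk) (H : Finset Disk) (d c : ℂ) (δ κ : ℝ) : Finset Disk :=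
  {l ∈ Finset.Icc ⌈((d * B.1).im - B.2 - c.im) / δ⌉ ⌊((d * B.1).im + B.2 - c.im) / δ⌋ |
    pole d c δ l ∈ region B H}.image fun l => (pole d c δ l, κ * δ)

section Holes

variable {B : Disk} {H H' : Finset Disk} {d c : ℂ} {δ κ : ℝ}

theorem mem_region {z : ℂ} :
    z ∈ region B H ↔ dist z B.1 ≤ B.2 ∧ ∀ h ∈ H, h.2 ≤ dist z h.1 := by
  simp [region]

theorem isCompact_region (B : Disk) (H : Finset Disk) : IsCompact (region B H) :=
  (isCompact_closedBall _ _).diff (isOpen_biUnion fun _ _ => isOpen_ball)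

theorem region_anti (hHH' : H ⊆ H') : region B H' ⊆ region B H :=
  sdiff_subset_sdiff_right (biUnion_subset_biUnion_left hHH')

theorem card_Icc_ceil_floor_le {u v : ℝ} (huv : u ≤ v + 1) :
    ((Finset.Icc ⌈u⌉ ⌊v⌋).card : ℝ) ≤ v - u + 1 := by
  rw [Int.card_Icc, ← Int.cast_natCast, Int.toNat_eq_max]
  push_cast
  exact max_le (by linarith [Int.floor_le v, Int.le_ceil u]) (by linarith)

theorem mem_wallHoles (hd : ‖d‖ = 1) (hδ : 0 < δ) {g : Disk} :
    g ∈ wallHoles B H d c δ κ ↔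
      ∃ l : ℤ, pole d c δ l ∈ region B H ∧ (pole d c δ l, κ * δ) = g := by
  classical
  rw [wallHoles, Finset.mem_image]
  refine exists_congr fun l => and_congr_left fun _ => ?_
  rw [Finset.mem_filter, and_iff_right_of_imp]
  intro hl
  have him : |c.im + l * δ - (d * B.1).im| ≤ B.2 := by
    refine le_trans ?_ (mem_region.1 hl).1
    rw [dist_eq_norm_mul_sub_mul hd, mul_pole hd]
    refine le_trans (le_of_eq ?_) (Complex.abs_im_le_norm _)
    simp
  rw [abs_le] at him
  rw [Finset.mem_Icc, Int.ceil_le, Int.le_floor, div_le_iff₀ hδ, le_div_iff₀ hδ]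
  constructor <;> linarith

theorem sum_wallHoles_le (hB : 0 ≤ B.2) (hδ : 0 < δ) (hκ : 0 ≤ κ) :
    ∑ g ∈ wallHoles B H d c δ κ, g.2 ≤ (2 * B.2 + δ) * κ := by
  classical
  set u := ((d * B.1).im - B.2 - c.im) / δ with hu
  set v := ((d * B.1).im + B.2 - c.im) / δ with hv
  have hvu : v - u = 2 * B.2 / δ := by rw [hu, hv]; ring
  have hcard : ((wallHoles B H d c δ κ).card : ℝ) ≤ v - u + 1 := by
    refine le_trans ?_ (card_Icc_ceil_floor_le ?_)
    · exact_mod_cast Finset.card_image_le.trans (Finset.card_filter_le _ _)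
    · linarith [(by positivity : 0 ≤ 2 * B.2 / δ)]
  have hradius : ∀ g ∈ wallHoles B H d c δ κ, g.2 = κ * δ := by
    intro g hg
    obtain ⟨l, -, rfl⟩ := Finset.mem_image.1 hg
    rfl
  calc ∑ g ∈ wallHoles B H d c δ κ, g.2 = (wallHoles B H d c δ κ).card * (κ * δ) := by
        rw [Finset.sum_congr rfl hradius, Finset.sum_const, nsmul_eq_mul]
    _ ≤ (v - u + 1) * (κ * δ) := by gcongr
    _ = (2 * B.2 + δ) * κ := by rw [hvu]; field_simp

theorem PolesAvoid.dist_add_lt (hc : PolesAvoid (insert B H) d c δ κ) {l : ℤ}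
    (hl : pole d c δ l ∈ region B H) : dist (pole d c δ l) B.1 + κ * δ < B.2 := by
  have := hc l B (Finset.mem_insert_self _ _)
  rw [abs_of_nonpos (by linarith [(mem_region.1 hl).1])] at this
  linarith

theorem PolesAvoid.add_lt_dist (hc : PolesAvoid (insert B H) d c δ κ) {l : ℤ}
    (hl : pole d c δ l ∈ region B H) {h : Disk} (hh : h ∈ H) :
    κ * δ + h.2 < dist (pole d c δ l) h.1 := by
  have := hc l h (Finset.mem_insert_of_mem hh)
  rw [abs_of_nonneg (by linarith [(mem_region.1 hl).2 h hh])] at this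
  linarith

theorem IsAdmissible.union_wallHoles (hH : IsAdmissible B H) (hd : ‖d‖ = 1) (hδ : 0 < δ)
    (hκ₀ : 0 < κ) (hκ : κ < 1 / 2) (hc : PolesAvoid (insert B H) d c δ κ) :
    IsAdmissible B (H ∪ wallHoles B H d c δ κ) := by
  have hnew {l : ℤ} (hl : pole d c δ l ∈ region B H) {h : Disk} (hh : h ∈ H) :
      Disjoint (closedBall (pole d c δ l) (κ * δ)) (closedBall h.1 h.2) :=
    closedBall_disjoint_closedBall (hc.add_lt_dist hl hh)
  refine ⟨?_, ?_, ?_⟩ <;> simp only [Finset.mem_union, mem_wallHoles hd hδ]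
  · rintro h (hh | ⟨l, -, rfl⟩)
    exacts [hH.pos h hh, mul_pos hκ₀ hδ]
  · rintro h (hh | ⟨l, hl, rfl⟩)
    · exact hH.subset_ball h hh
    · exact closedBall_subset_ball' (by linarith [hc.dist_add_lt hl])
  · rintro h (hh | ⟨l, hl, rfl⟩) g (hg | ⟨l', hl', rfl⟩) hne
    · exact hH.disjoint h hh g hg hne
    · exact (hnew hl' hh).symm
    · exact hnew hl hg
    · have hll' : l ≠ l' := by
        rintro rfl
        exact hne rfl
      refine closedBall_disjoint_closedBall (lt_of_lt_of_le ?_ (le_dist_pole_pole hd c hδ.le hll'))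
      dsimp only
      nlinarith

theorem PolesAvoid.le_dist_pole (hc : PolesAvoid (insert B H) d c δ κ) (hd : ‖d‖ = 1)
    (hδ : 0 < δ) {z : ℂ} (hz : z ∈ region B (H ∪ wallHoles B H d c δ κ)) (l : ℤ) :
    κ * δ ≤ dist z (pole d c δ l) := by
  rw [mem_region] at hz
  by_cases hl : pole d c δ l ∈ region B H
  · exact hz.2 (pole d c δ l, κ * δ)
      (Finset.mem_union_right _ ((mem_wallHoles hd hδ).2 ⟨l, hl, rfl⟩))
  rw [mem_region, not_and_or] at hl
  push Not at hl
  rcases hl with hout | ⟨h, hh, hin⟩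
  · have hmargin := hc l B (Finset.mem_insert_self _ _)
    rw [abs_of_pos (by linarith)] at hmargin
    linarith [dist_triangle_left (pole d c δ l) B.1 z]
  · have hmargin := hc l h (Finset.mem_insert_of_mem hh)
    rw [abs_of_neg (by linarith)] at hmargin
    linarith [dist_triangle z (pole d c δ l) h.1, hz.2 h (Finset.mem_union_left _ hh)]

end Holes

/-! ### Tasks and their progress -/

/-- The data of a separation problem: an axis-parallel direction `d` and two levels of
`z ↦ re (d * z)`. -/
structure SeparationTask where
  d : ℂ
  q : ℝ
  q' : ℝ
  lt : q < q'
  pow_four : d ^ 4 = 1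

/-- Some function in `R(X)`, in the form of `RationallyApproximableOn`, vanishes beyond the upper
level of the task and has no zero below the lower one. -/
def SeparationTask.IsSolvableOn (T : SeparationTask) (X : Set ℂ) : Prop :=
  ∃ f : ℂ → ℂ, RationallyApproximableOn f X ∧
    (∀ z ∈ X, T.q' ≤ (T.d * z).re → f z = 0) ∧ ∀ z ∈ X, (T.d * z).re ≤ T.q → f z ≠ 0

/-- An approximate solution `fn` of a task, namely a finite product of walls. The position of the
next wall is confined to `Ioo lo hi`, the radius of its holes relative to the spacing of its poles
is already fixed as `κ`, and `err` bounds the total of all later changes of `fn`. -/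
structure Progress where
  fn : ℂ → ℂ
  lo : ℝ
  hi : ℝ
  κ : ℝ
  err : ℝ

/-- The invariant of the construction of a solution of the task `T` on `K`, where `O` is the set of
disks whose boundary circles the next poles have to avoid. -/
structure IsProgress (O : Finset Disk) (K : Set ℂ) (T : SeparationTask) (D : Progress) : Prop where
  q_le_lo : T.q ≤ D.lo
  lo_lt_hi : D.lo < D.hi
  hi_le_q' : D.hi ≤ T.q'
  κ_pos : 0 < D.κ
  κ_le : D.κ ≤ 1 / 8
  isGoodWindow : IsGoodWindow O T.d D.lo D.hi D.κ
  rationallyApproximableOn : RationallyApproximableOn D.fn K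
  err_pos : 0 < D.err
  -- The next wall is bounded by `κ⁻¹`, so multiplication by it changes `fn` by at most `err / 2`.
  norm_fn_mul_le : ∀ z ∈ K, D.lo ≤ (T.d * z).re → ‖D.fn z‖ * (1 + D.κ⁻¹) ≤ D.err / 2
  exists_norm_fn_sub_one_le : ∃ g < 1 / 2, ∀ z ∈ K, (T.d * z).re ≤ T.q → ‖D.fn z - 1‖ ≤ g

/-- Passing from `D` to `D'` changes the approximate solution on `K` by no more than the decrease
of the error bound. -/
structure Progress.ImprovesOn (K : Set ℂ) (D D' : Progress) : Prop where
  err_le : D'.err ≤ D.err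
  norm_sub_le : ∀ z ∈ K, ‖D'.fn z - D.fn z‖ ≤ D.err - D'.err

theorem Progress.ImprovesOn.refl (K : Set ℂ) (D : Progress) : D.ImprovesOn K D :=
  ⟨le_rfl, by simp⟩

/-- The approximate solution `D` after a wall has been built with base point `c` and
spacing `δ`. -/
noncomputable def Progress.mulWall (D : Progress) (d c : ℂ) (δ lo hi κ err : ℝ) : Progress :=
  ⟨fun z => D.fn z * wall d c δ z, lo, hi, κ, err⟩

theorem SeparationTask.norm_d (T : SeparationTask) : ‖T.d‖ = 1 :=
  Complex.norm_eq_one_of_pow_eq_one T.pow_four (by norm_num)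

namespace IsProgress

variable {O G : Finset Disk} {K L : Set ℂ} {T : SeparationTask} {D : Progress}

theorem mono (hD : IsProgress O K T D) (hLK : L ⊆ K) : IsProgress O L T D where
  __ := hD
  rationallyApproximableOn := hD.rationallyApproximableOn.mono hLK
  norm_fn_mul_le z hz := hD.norm_fn_mul_le z (hLK hz)
  exists_norm_fn_sub_one_le :=
    hD.exists_norm_fn_sub_one_le.imp fun _ hg => ⟨hg.1, fun z hz => hg.2 z (hLK hz)⟩

theorem exists_union_wall {d c : ℂ} {δ κ' : ℝ} (hD : IsProgress O K T D) (hd : d ^ 4 = 1)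
    (hδ : 0 < δ) (hκ' : κ' ≤ 1 / 8) (hlen : 2 * δ ≤ D.hi - D.lo)
    (hG : ∀ g ∈ G, ∃ l : ℤ, g = (pole d c δ l, κ' * δ)) :
    ∃ lo hi : ℝ, IsProgress (O ∪ G) K T { D with lo := lo, hi := hi } := by
  obtain ⟨lo, hi, hlo, hlohi, hhi, hW⟩ :=
    hD.isGoodWindow.exists_union_wall hd T.pow_four hδ hκ' hlen hG
  exact ⟨lo, hi, { hD with
    q_le_lo := hD.q_le_lo.trans hlo
    lo_lt_hi := hlohi
    hi_le_q' := hhi.trans hD.hi_le_q'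
    isGoodWindow := hW
    norm_fn_mul_le := fun z hz hz' => hD.norm_fn_mul_le z hz (hlo.trans hz') }⟩

theorem norm_fn_le (hD : IsProgress O K T D) {z : ℂ} (hz : z ∈ K) (hlo : D.lo ≤ (T.d * z).re) :
    ‖D.fn z‖ ≤ D.err := by
  have hκ := inv_pos.2 hD.κ_pos
  nlinarith [hD.norm_fn_mul_le z hz hlo, norm_nonneg (D.fn z), hD.err_pos]

theorem norm_fn_mul_sub_le (hD : IsProgress O K T D) {z w : ℂ} (hz : z ∈ K)
    (hlo : D.lo ≤ (T.d * z).re) (hw : ‖w‖ ≤ D.κ⁻¹) : ‖D.fn z * w - D.fn z‖ ≤ D.err / 2 :=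
  calc ‖D.fn z * w - D.fn z‖ = ‖D.fn z‖ * ‖w - 1‖ := by rw [← norm_mul, mul_sub_one]
    _ ≤ ‖D.fn z‖ * (1 + D.κ⁻¹) := by
        gcongr
        linarith [norm_sub_le w 1, norm_one (α := ℂ)]
    _ ≤ D.err / 2 := hD.norm_fn_mul_le z hz hlo

theorem exists_start (O : Finset Disk) (K : Set ℂ) (T : SeparationTask) {κ₀ : ℝ} (hκ₀ : 0 < κ₀) :
    ∃ D : Progress, D.κ ≤ κ₀ ∧ IsProgress O K T D := by
  obtain ⟨lo, hi, κ, hlo, hlohi, hhi, hκ, hκκ₀, hW⟩ :=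
    exists_isGoodWindow O T.norm_d T.lt (by positivity : 0 < min κ₀ (1 / 8))
  exact ⟨⟨fun _ => 1, lo, hi, κ, 2 * (1 + κ⁻¹)⟩, hκκ₀.trans (min_le_left _ _),
    { q_le_lo := hlo
      lo_lt_hi := hlohi
      hi_le_q' := hhi
      κ_pos := hκ
      κ_le := hκκ₀.trans (min_le_right _ _)
      isGoodWindow := hW
      rationallyApproximableOn := by simpa using RationallyApproximableOn.polynomial (K := K) 1
      err_pos := by positivity
      norm_fn_mul_le := by simp
      exists_norm_fn_sub_one_le := ⟨0, by norm_num, by simp⟩ }⟩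

theorem eventually_improvesOn (hD : IsProgress O K T D) (hK : IsCompact K) {t : ℝ}
    (ht : D.lo < t) {err : ℝ} (herr : err ≤ D.err / 2) (lo hi κ : ℝ) :
    ∀ᶠ δ : ℝ in 𝓝[>] 0, ∀ c : ℂ, c.re = t → ∀ L ⊆ K,
      (∀ z ∈ L, ∀ l : ℤ, D.κ * δ ≤ dist z (pole T.d c δ l)) →
      D.ImprovesOn L (D.mulWall T.d c δ lo hi κ err) := by
  filter_upwards [eventually_norm_mul_wall_sub_le hK hD.rationallyApproximableOn.continuousOn T.d
    ht (half_pos hD.err_pos), self_mem_nhdsWithin] with δ hleft hδ c hct L hLK hL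
  refine ⟨?_, fun z hz => le_trans ?_ (le_sub_comm.2 (herr.trans_eq (sub_half _).symm))⟩
  · exact herr.trans (half_le_self hD.err_pos.le)
  rcases le_total (T.d * z).re D.lo with hzlo | hzlo
  · exact hleft c hct z (hLK hz) hzlo
  · exact hD.norm_fn_mul_sub_le (hLK hz) hzlo
      (norm_wall_le T.norm_d hδ hD.κ_pos (by linarith [hD.κ_le]) (hL z hz))

theorem eventually_isProgress_mulWall (hD : IsProgress O K T D) (hK : IsCompact K)
    {t lo hi κ err : ℝ} (ht : D.lo < t) (hlo : t < lo) (hlohi : lo < hi) (hhi : hi ≤ D.hi)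
    (hκ₀ : 0 < κ) (hκ : κ ≤ 1 / 8) (hW : IsGoodWindow O T.d lo hi κ) (herr : 0 < err) :
    ∀ᶠ δ : ℝ in 𝓝[>] 0, ∀ c : ℂ, c.re = t → ∀ L ⊆ K, IsCompact L →
      (∀ z ∈ L, ∀ l : ℤ, D.κ * δ ≤ dist z (pole T.d c δ l)) →
      IsProgress O L T (D.mulWall T.d c δ lo hi κ err) := by
  obtain ⟨g, hg, hgK⟩ := hD.exists_norm_fn_sub_one_le
  have hcont := hD.rationallyApproximableOn.continuousOn
  filter_upwards [
    eventually_norm_mul_wall_sub_le hK hcont T.d ht (by linarith : 0 < (1 / 2 - g) / 2),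
    eventually_norm_mul_wall_le hK hcont T.d hlo (by positivity : 0 < err / 2 / (1 + κ⁻¹)),
    self_mem_nhdsWithin] with δ hleft hright hδ c hct L hLK hLc hL
  exact
    { q_le_lo := hD.q_le_lo.trans (ht.trans hlo).le
      lo_lt_hi := hlohi
      hi_le_q' := hhi.trans hD.hi_le_q'
      κ_pos := hκ₀
      κ_le := hκ
      isGoodWindow := hW
      rationallyApproximableOn := (hD.rationallyApproximableOn.mono hLK).mul hLc
        (rationallyApproximableOn_wall hLc T.norm_d hδ hD.κ_pos (by linarith [hD.κ_le]) hL)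
      err_pos := herr
      norm_fn_mul_le := fun z hz hzlo =>
        (le_div_iff₀ (by positivity)).1 (hright c hct z (hLK hz) hzlo)
      exists_norm_fn_sub_one_le := ⟨(1 / 2 - g) / 2 + g, by linarith, fun z hz hzq =>
        (norm_sub_le_norm_sub_add_norm_sub _ (D.fn z) _).trans (add_le_add
          (hleft c hct z (hLK hz) (hzq.trans hD.q_le_lo)) (hgK z (hLK hz) hzq))⟩ }

/- The constants of the next wall, in particular the radius `κ` of its holes, are chosen before
the spacing `δ` of the present one, so that `δ` can be adapted to them. -/
theorem exists_advance (hD : IsProgress O K T D) (hK : IsCompact K) {κ₀ η : ℝ} (hκ₀ : 0 < κ₀)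
    (hη : 0 < η) :
    ∃ t ∈ Ioo D.lo D.hi, ∀ᶠ δ : ℝ in 𝓝[>] 0, ∀ c : ℂ, c.re = t → ∀ L ⊆ K, IsCompact L →
      (∀ z ∈ L, ∀ l : ℤ, D.κ * δ ≤ dist z (pole T.d c δ l)) →
      ∃ D' : Progress, IsProgress O L T D' ∧ D.ImprovesOn L D' ∧ D'.κ ≤ κ₀ ∧ D'.err ≤ η ∧
        2 * δ ≤ D'.hi - D'.lo := by
  obtain ⟨t, ht⟩ := exists_between hD.lo_lt_hi
  obtain ⟨a, ha⟩ := exists_between ht.2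
  obtain ⟨lo, hi, κ, hlo, hlohi, hhi, hκ, hκκ₀, hW⟩ :=
    exists_isGoodWindow O T.norm_d ha.2 (by positivity : 0 < min κ₀ (1 / 8))
  have herr : 0 < min (D.err / 2) η := lt_min (half_pos hD.err_pos) hη
  refine ⟨t, ht, ?_⟩
  filter_upwards [hD.eventually_improvesOn hK ht.1 (min_le_left _ η) lo hi κ,
    hD.eventually_isProgress_mulWall hK ht.1 (ha.1.trans_le hlo) hlohi hhi hκ
      (hκκ₀.trans (min_le_right _ _)) hW herr,
    eventually_const_mul_lt 2 (sub_pos.2 hlohi)] with δ himp hprog hlen c hct L hLK hLc hL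
  exact ⟨_, hprog c hct L hLK hLc hL, himp c hct L hLK hL, hκκ₀.trans (min_le_left _ _),
    min_le_right _ _, hlen.le⟩

end IsProgress

/-! ### The construction -/

theorem exists_forall_norm_sub_le_of_norm_sub_le_sub {E : Type*} [NormedAddCommGroup E]
    [CompleteSpace E] {u : ℕ → E} {e : ℕ → ℝ} (hu : ∀ k, ‖u (k + 1) - u k‖ ≤ e k - e (k + 1))
    (he : Tendsto e atTop (𝓝 0)) : ∃ a, ∀ k, ‖a - u k‖ ≤ e k := by
  have hanti : Antitone e := antitone_nat_of_succ_le fun k =>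
    sub_nonneg.1 ((norm_nonneg _).trans (hu k))
  have hdist (k m : ℕ) (hkm : k ≤ m) : ‖u m - u k‖ ≤ e k - e m := by
    induction m, hkm using Nat.le_induction with
    | base => simp
    | succ m _ ih => linarith [norm_sub_le_norm_sub_add_norm_sub (u (m + 1)) (u m) (u k), hu m]
  have hdist_le (k m : ℕ) (hkm : k ≤ m) : ‖u m - u k‖ ≤ e k := by
    linarith [hdist k m hkm, hanti.le_of_tendsto he m]
  obtain ⟨a, ha⟩ := cauchySeq_tendsto_of_complete (cauchySeq_of_le_tendsto_0' (s := u) e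
    (fun k m hkm => by rw [dist_comm, dist_eq_norm]; exact hdist_le k m hkm) he)
  exact ⟨a, fun k => le_of_tendsto (ha.sub_const (u k)).norm
    ((eventually_ge_atTop k).mono fun m => hdist_le k m)⟩

theorem sum_apply_update {ι α : Type*} [Fintype ι] [DecidableEq ι] (φ : α → ℝ) (f : ι → α) (n : ι)
    (a : α) : ∑ i, φ (Function.update f n a i) = ∑ i, φ (f i) - φ (f n) + φ a := by
  have hsplit := fun u : ι → ℝ => (Finset.add_sum_erase Finset.univ u (Finset.mem_univ n)).symm
  rw [hsplit, hsplit fun i => φ (f i), Function.update_self,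
    Finset.sum_congr rfl fun i hi => by rw [Function.update_of_ne (Finset.ne_of_mem_erase hi)]]
  ring

/-- The state of the construction when the tasks `T 0, …, T (N - 1)` are in progress: the radii of
the holes made so far, together with the amounts reserved for the next wall of every task, add up
to less than the budget `b`. -/
structure Stage (B : Disk) (T : ℕ → SeparationTask) (b : ℝ) (N : ℕ) where
  holes : Finset Disk
  progress : Fin N → Progress
  isAdmissible : IsAdmissible B holes
  budget : ∑ h ∈ holes, h.2 + ∑ i, (2 * B.2 + 1) * (progress i).κ < b
  isProgress (i : Fin N) : IsProgress (insert B holes) (region B holes) (T i) (progress i)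

namespace Stage

variable {B : Disk} {T : ℕ → SeparationTask} {b : ℝ} {N : ℕ}

theorem exists_pos_add_mul_lt (S : Stage B T b N) (hB : 0 ≤ B.2) :
    ∃ κ₀ > 0, ∀ κ ≤ κ₀, ∑ h ∈ S.holes, h.2 + ∑ i, (2 * B.2 + 1) * (S.progress i).κ +
      (2 * B.2 + 1) * κ < b := by
  obtain ⟨x, hx₀, hx⟩ := exists_between (sub_pos.2 S.budget)
  refine ⟨x / (2 * B.2 + 1), by positivity, fun κ hκ => ?_⟩
  rw [le_div_iff₀' (by positivity)] at hκ
  linarith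

theorem exists_addTask (S : Stage B T b N) (hB : 0 ≤ B.2) :
    ∃ S' : Stage B T b (N + 1), S'.holes = S.holes ∧
      ∀ i, S'.progress (Fin.castSucc i) = S.progress i := by
  obtain ⟨κ₀, hκ₀, hbudget⟩ := S.exists_pos_add_mul_lt hB
  obtain ⟨D, hDκ, hD⟩ :=
    IsProgress.exists_start (insert B S.holes) (region B S.holes) (T N) hκ₀
  refine ⟨⟨S.holes, Fin.snoc S.progress D, S.isAdmissible, ?_, ?_⟩, rfl,
    fun i => Fin.snoc_castSucc (α := fun _ => Progress) ..⟩
  · simp only [Fin.sum_univ_castSucc, Fin.snoc_castSucc, Fin.snoc_last]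
    exact add_assoc (∑ h ∈ S.holes, h.2) .. ▸ hbudget D.κ hDκ
  · intro i
    induction i using Fin.lastCases with
    | last => simpa using hD
    | cast i => simpa using S.isProgress i

theorem exists_stage_of_polesAvoid (S : Stage B T b N) (hB : 0 ≤ B.2) (n : Fin N) {c : ℂ} {δ : ℝ}
    (hδ₀ : 0 < δ) (hδ₁ : δ ≤ 1)
    (hc : PolesAvoid (insert B S.holes) (T n).d c δ (S.progress n).κ) {D : Fin N → Progress}
    (hD : ∀ i : Fin N, IsProgress (insert B S.holes) (region B (S.holes ∪
      wallHoles B S.holes (T n).d c δ (S.progress n).κ)) (T i) (D i))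
    (hlen : ∀ i, 2 * δ ≤ (D i).hi - (D i).lo)
    (hbudget : ∑ h ∈ S.holes, h.2 + (2 * B.2 + 1) * (S.progress n).κ +
      ∑ i, (2 * B.2 + 1) * (D i).κ < b) :
    ∃ S' : Stage B T b N,
      S'.holes = S.holes ∪ wallHoles B S.holes (T n).d c δ (S.progress n).κ ∧
      ∃ lo hi : Fin N → ℝ, S'.progress = fun i => { D i with lo := lo i, hi := hi i } := by
  have hn := S.isProgress n
  have hG : ∀ g ∈ wallHoles B S.holes (T n).d c δ (S.progress n).κ,
      ∃ l : ℤ, g = (pole (T n).d c δ l, (S.progress n).κ * δ) := by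
    intro g hg
    obtain ⟨l, -, rfl⟩ := (mem_wallHoles (T n).norm_d hδ₀).1 hg
    exact ⟨l, rfl⟩
  choose lo hi hprog using fun i =>
    (hD i).exists_union_wall (T n).pow_four hδ₀ hn.κ_le (hlen i) hG
  refine ⟨⟨_, fun i => { D i with lo := lo i, hi := hi i }, S.isAdmissible.union_wallHoles
    (T n).norm_d hδ₀ hn.κ_pos (by linarith [hn.κ_le]) hc, ?_, ?_⟩, rfl, lo, hi, rfl⟩
  · have hunion := Finset.sum_union_inter (s₁ := S.holes)
      (s₂ := wallHoles B S.holes (T n).d c δ (S.progress n).κ) (f := Prod.snd)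
    have hinter : 0 ≤ ∑ h ∈ S.holes ∩ wallHoles B S.holes (T n).d c δ (S.progress n).κ, h.2 :=
      Finset.sum_nonneg fun h hh =>
        (S.isAdmissible.pos h (Finset.mem_of_mem_inter_left hh)).le
    have hnew : ∑ g ∈ wallHoles B S.holes (T n).d c δ (S.progress n).κ, g.2 ≤
        (2 * B.2 + 1) * (S.progress n).κ :=
      (sum_wallHoles_le hB hδ₀ hn.κ_pos.le).trans (by gcongr; exact hn.κ_pos.le)
    linarith
  · simpa only [Finset.insert_union] using hprog

theorem exists_advance (S : Stage B T b N) (hB : 0 ≤ B.2) (n : Fin N) {η : ℝ} (hη : 0 < η) :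
    ∃ S' : Stage B T b N, S.holes ⊆ S'.holes ∧
      (∀ i, (S.progress i).ImprovesOn (region B S'.holes) (S'.progress i)) ∧
      (S'.progress n).err ≤ η := by
  obtain ⟨κ₀, hκ₀, hbudget⟩ := S.exists_pos_add_mul_lt hB
  obtain ⟨t, ht, hadvance⟩ := (S.isProgress n).exists_advance (isCompact_region _ _) hκ₀ hη
  have hlen : ∀ᶠ δ : ℝ in 𝓝[>] 0, ∀ i, 2 * δ < (S.progress i).hi - (S.progress i).lo :=
    eventually_all.2 fun i => eventually_const_mul_lt 2 (sub_pos.2 (S.isProgress i).lo_lt_hi)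
  obtain ⟨δ, hδ, hwindow, hδlen, hδ₁, hδ₀⟩ := (hadvance.and ((S.isProgress n).isGoodWindow.and
    (hlen.and ((eventually_const_mul_lt 1 one_pos).and self_mem_nhdsWithin)))).exists
  have hδ₀ : 0 < δ := hδ₀
  obtain ⟨c, hct, hc⟩ := hwindow t ht
  have hsub := region_anti (B := B) (Finset.subset_union_left (s₁ := S.holes)
    (s₂ := wallHoles B S.holes (T n).d c δ (S.progress n).κ))
  obtain ⟨D₁, hprog, himp, hκ, herr, hD₁len⟩ := hδ c hct _ hsub (isCompact_region _ _)
    fun z hz l => hc.le_dist_pole (T n).norm_d hδ₀ hz l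
  obtain ⟨S', hholes, lo', hi', hprogress⟩ := S.exists_stage_of_polesAvoid hB n hδ₀ (by linarith) hc
    (D := Function.update S.progress n D₁)
    ((Function.forall_update_iff _ fun (i : Fin N) D => IsProgress _ _ (T i) D).2
      ⟨hprog, fun i _ => (S.isProgress i).mono hsub⟩)
    ((Function.forall_update_iff _ fun _ (D : Progress) => 2 * δ ≤ D.hi - D.lo).2
      ⟨hD₁len, fun i _ => (hδlen i).le⟩)
    (by
      rw [sum_apply_update fun D : Progress => (2 * B.2 + 1) * D.κ]
      linarith [hbudget D₁.κ hκ])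
  have himproves : ∀ i, (S.progress i).ImprovesOn (region B S'.holes)
      (Function.update S.progress n D₁ i) := by
    rw [hholes]
    exact (Function.forall_update_iff _ fun i D => (S.progress i).ImprovesOn _ D).2
      ⟨himp, fun i _ => .refl _ _⟩
  refine ⟨S', hholes ▸ Finset.subset_union_left, fun i => ?_, ?_⟩ <;> rw [hprogress]
  · exact ⟨(himproves i).err_le, (himproves i).norm_sub_le⟩
  · simpa using herr

/-- The relation between consecutive stages of the construction. At step `N` the task `T N` is
added, and the task whose index is the first component of `Nat.unpair N` makes progress, so that
every task does so infinitely often. -/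
structure Extends (S : Stage B T b N) (S' : Stage B T b (N + 1)) : Prop where
  holes_subset : S.holes ⊆ S'.holes
  improvesOn (i : Fin N) :
    (S.progress i).ImprovesOn (region B S'.holes) (S'.progress (Fin.castSucc i))
  err_le (i : Fin (N + 1)) : (i : ℕ) = (Nat.unpair N).1 → (S'.progress i).err ≤ 1 / (N + 1)

theorem exists_extends (S : Stage B T b N) (hB : 0 ≤ B.2) :
    ∃ S' : Stage B T b (N + 1), S.Extends S' := by
  obtain ⟨S₁, hholes, hprogress⟩ := S.exists_addTask hB
  obtain ⟨S', hsub, himp, herr⟩ := S₁.exists_advance hB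
    ⟨(Nat.unpair N).1, Nat.lt_succ_of_le (Nat.unpair_left_le N)⟩ (η := 1 / (N + 1)) (by positivity)
  refine ⟨S', hholes ▸ hsub, fun i => hprogress i ▸ himp (Fin.castSucc i), fun i hi => ?_⟩
  obtain rfl : i = ⟨(Nat.unpair N).1, Nat.lt_succ_of_le (Nat.unpair_left_le N)⟩ := Fin.ext hi
  exact herr

theorem exists_seq_extends (hB : 0 ≤ B.2) (S₀ : Stage B T b 0) :
    ∃ S : ∀ N, Stage B T b N, S 0 = S₀ ∧ ∀ N, (S N).Extends (S (N + 1)) := by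
  choose next hnext using fun (N : ℕ) (S : Stage B T b N) => S.exists_extends hB
  exact ⟨fun N => Nat.rec S₀ next N, rfl, fun N => hnext N _⟩

variable {S : ∀ N, Stage B T b N}

theorem tendsto_err (hS : ∀ N, (S N).Extends (S (N + 1))) (n : ℕ) :
    Tendsto (fun k => ((S (n + k + 1)).progress ⟨n, by omega⟩).err) atTop (𝓝 0) := by
  have hanti : Antitone fun k => ((S (n + k + 1)).progress ⟨n, by omega⟩).err :=
    antitone_nat_of_succ_le fun k => ((hS (n + k + 1)).improvesOn ⟨n, by omega⟩).err_le
  have hk (j : ℕ) : n + (Nat.pair n j - n) = Nat.pair n j :=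
    Nat.add_sub_cancel' (Nat.left_le_pair n j)
  have htop : Tendsto (fun j => Nat.pair n j - n) atTop atTop :=
    tendsto_atTop_mono (fun j => Nat.sub_le_sub_right (Nat.right_le_pair n j) n)
      (tendsto_sub_atTop_nat n)
  refine (tendsto_iff_tendsto_subseq_of_antitone hanti htop).2
    (squeeze_zero (fun j => ((S _).isProgress _).err_pos.le) (fun j => ?_)
      tendsto_one_div_add_atTop_nhds_zero_nat)
  have hunpair : n = (Nat.unpair (n + (Nat.pair n j - n))).1 := by rw [hk, Nat.unpair_pair]
  refine ((hS (n + (Nat.pair n j - n))).err_le ⟨n, by omega⟩ hunpair).trans ?_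
  rw [← Nat.cast_add_one, ← Nat.cast_add_one, hk]
  gcongr
  exact Nat.right_le_pair n j

theorem isSolvableOn (hS : ∀ N, (S N).Extends (S (N + 1))) {X : Set ℂ}
    (hX : ∀ N, X ⊆ region B (S N).holes) (n : ℕ) : (T n).IsSolvableOn X := by
  set D : ℕ → Progress := fun k => (S (n + k + 1)).progress ⟨n, by omega⟩
  have hD (k : ℕ) : IsProgress (insert B (S (n + k + 1)).holes) X (T n) (D k) :=
    ((S (n + k + 1)).isProgress ⟨n, by omega⟩).mono (hX _)
  have herr : Tendsto (fun k => (D k).err) atTop (𝓝 0) := tendsto_err hS n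
  have hlim (z : ℂ) (hz : z ∈ X) : ∃ a, ∀ k, ‖a - (D k).fn z‖ ≤ (D k).err :=
    exists_forall_norm_sub_le_of_norm_sub_le_sub (fun k =>
      ((hS (n + k + 1)).improvesOn ⟨n, by omega⟩).norm_sub_le z (hX _ hz)) herr
  choose! f hf using hlim
  have hunif : TendstoUniformlyOn (fun k => (D k).fn) f atTop X := by
    refine Metric.tendstoUniformlyOn_iff.2 fun η hη => ?_
    filter_upwards [herr.eventually (gt_mem_nhds hη)] with k hk z hz
    rw [dist_eq_norm]
    exact (hf z hz k).trans_lt hk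
  refine ⟨f, .of_tendstoUniformlyOn (.of_forall fun k => (hD k).rationallyApproximableOn) hunif,
    fun z hz hq' => ?_, fun z hz hq hzero => ?_⟩
  · refine tendsto_nhds_unique (hunif.tendsto_at hz) (squeeze_zero_norm (fun k => ?_) herr)
    exact (hD k).norm_fn_le hz (((hD k).lo_lt_hi.le.trans (hD k).hi_le_q').trans hq')
  · have hle : ‖f z - 1‖ ≤ 1 / 2 := by
      refine le_of_tendsto ((hunif.tendsto_at hz).sub_const 1).norm (.of_forall fun k => ?_)
      obtain ⟨g, hg, hgX⟩ := (hD k).exists_norm_fn_sub_one_le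
      exact (hgX z hz hq).trans hg.le
    norm_num [hzero] at hle

end Stage

/-! ### Regularity -/

/-- The separation tasks with rational data, indexed by a countable type. -/
noncomputable def rationalTask (p : Fin 4 × {p : ℚ × ℚ // p.1 < p.2}) : SeparationTask where
  d := Complex.I ^ (p.1 : ℕ)
  q := p.2.1.1
  q' := p.2.1.2
  pow_four := by rw [← pow_mul, mul_comm, pow_mul, Complex.I_pow_four, one_pow]
  lt := by exact_mod_cast p.2.2

section Regular

variable {X : Set ℂ} [CompactSpace X]

theorem exists_fin_four_half_le_re_I_pow_mul {w : ℂ} {r : ℝ} (hr : r ≤ ‖w‖) :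
    ∃ j : Fin 4, r / 2 ≤ (Complex.I ^ (j : ℕ) * w).re := by
  by_contra! hlt
  have hre : |w.re| < r / 2 := by
    have h₀ : w.re < r / 2 := by simpa using hlt 0
    have h₂ : -w.re < r / 2 := by simpa using hlt 2
    exact abs_lt.2 ⟨by linarith, h₀⟩
  have him : |w.im| < r / 2 := by
    have h₁ : -w.im < r / 2 := by simpa using hlt 1
    have h₃ : w.im < r / 2 := by simpa [Complex.I_pow_three] using hlt 3
    exact abs_lt.2 ⟨by linarith, h₃⟩
  linarith [Complex.norm_le_abs_re_add_abs_im w]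

theorem exists_mem_Rx_ne_zero_of_isSolvableOn (hX : ∀ p, (rationalTask p).IsSolvableOn X)
    (x : X) (j : Fin 4) {r : ℝ} (hr : 0 < r) :
    ∃ F ∈ Rx X, F x ≠ 0 ∧ ∀ y : X, r ≤ (Complex.I ^ (j : ℕ) * (y - x : ℂ)).re → F y = 0 := by
  obtain ⟨q', hxq', hq'⟩ := exists_rat_btwn
    (lt_add_of_pos_right (Complex.I ^ (j : ℕ) * (x : ℂ)).re hr)
  obtain ⟨q, hxq, hqq'⟩ := exists_rat_btwn hxq'
  obtain ⟨f, hf, hzero, hne⟩ := hX (j, ⟨(q, q'), by exact_mod_cast hqq'⟩)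
  obtain ⟨F, hF, hFf⟩ := hf.exists_mem_Rx
  refine ⟨F, hF, hFf x ▸ hne x x.2 hxq.le, fun y hy => hFf y ▸ hzero y y.2 ?_⟩
  rw [mul_sub, Complex.sub_re] at hy
  have hyq' : (q' : ℝ) ≤ (Complex.I ^ (j : ℕ) * (y : ℂ)).re := by linarith
  exact hyq'

theorem rxRegular_of_isSolvableOn (hX : ∀ p, (rationalTask p).IsSolvableOn X) :
    RxRegular X := by
  intro E hE x hx
  obtain ⟨r, hr, hrE⟩ := Metric.isOpen_iff.1 hE.isOpen_compl x hx
  choose F hF hFx hFzero using fun j =>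
    exists_mem_Rx_ne_zero_of_isSolvableOn hX x j (half_pos hr)
  refine ⟨(∏ j, F j x)⁻¹ • ∏ j, F j, Subalgebra.smul_mem _ (prod_mem fun j _ => hF j) _,
    ?_, fun y hy => ?_⟩
  · rw [ContinuousMap.smul_apply, ContinuousMap.prod_apply]
    exact inv_mul_cancel₀ (Finset.prod_ne_zero_iff.2 fun j _ => hFx j)
  · have hdist : r ≤ ‖(y - x : ℂ)‖ := by
      rw [← dist_eq_norm]
      exact not_lt.1 fun hlt => hrE (mem_ball.2 hlt) hy
    obtain ⟨j, hj⟩ := exists_fin_four_half_le_re_I_pow_mul hdist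
    rw [ContinuousMap.smul_apply, ContinuousMap.prod_apply]
    exact mul_eq_zero_of_right _ (Finset.prod_eq_zero (Finset.mem_univ j) (hFzero j y hj))

end Regular

theorem exists_monotone_holes_forall_rxRegular {B : Disk} (hB : 0 ≤ B.2) {H₀ : Finset Disk}
    (hH₀ : IsAdmissible B H₀) {ε : ℝ} (hε : 0 < ε) :
    ∃ H : ℕ → Finset Disk, H 0 = H₀ ∧ Monotone H ∧ (∀ m, IsAdmissible B (H m)) ∧
      (∀ m, ∑ h ∈ H m, h.2 < ∑ h ∈ H₀, h.2 + ε) ∧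
      ∀ (X : Set ℂ) [CompactSpace X], (∀ m, X ⊆ region B (H m)) → RxRegular X := by
  have : Nonempty (Fin 4 × {p : ℚ × ℚ // p.1 < p.2}) := ⟨0, (0, 1), one_pos⟩
  obtain ⟨task, htask⟩ := exists_surjective_nat (Fin 4 × {p : ℚ × ℚ // p.1 < p.2})
  obtain ⟨S, hS₀, hS⟩ := Stage.exists_seq_extends (T := rationalTask ∘ task)
    (b := ∑ h ∈ H₀, h.2 + ε) hB ⟨H₀, Fin.elim0, hH₀, by simpa using hε, fun i => i.elim0⟩
  refine ⟨fun m => (S m).holes, congrArg Stage.holes hS₀,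
    monotone_nat_of_le_succ fun m => (hS m).holes_subset, fun m => (S m).isAdmissible,
    fun m => lt_of_le_of_lt (le_add_of_nonneg_right ?_) (S m).budget, fun X _ hX =>
      rxRegular_of_isSolvableOn fun p => ?_⟩
  · exact Finset.sum_nonneg fun i _ => mul_nonneg (by positivity) ((S m).isProgress i).κ_pos.le
  · obtain ⟨n, rfl⟩ := htask p
    exact Stage.isSolvableOn hS hX n

/-! ### Swiss cheeses -/

theorem exists_seq_disk_of_countable {s : Set Disk} (hs : s.Countable) (hpos : ∀ h ∈ s, 0 < h.2)
    {C : ℝ} (hC : ∀ u : Finset Disk, ↑u ⊆ s → ∑ h ∈ u, h.2 ≤ C) :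
    ∃ D : ℕ → Disk, (∀ n, 0 ≤ (D n).2) ∧ s ⊆ range D ∧ (∀ n, 0 < (D n).2 → D n ∈ s) ∧
      InjOn D {n | 0 < (D n).2} ∧ Summable (fun n => (D n).2) ∧ ∑' n, (D n).2 ≤ C := by
  have := hs.to_subtype
  obtain ⟨e, he⟩ := exists_injective_nat s
  set D : ℕ → Disk := Function.extend e (↑) 0
  have hDe (i : s) : D (e i) = i := he.extend_apply _ _ i
  have hD₀ (n : ℕ) (hn : n ∉ range e) : D n = 0 := Function.extend_apply' _ _ _ hn
  have hmem {n : ℕ} (hn : 0 < (D n).2) : n ∈ range e := by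
    by_contra hne
    simp [hD₀ n hne] at hn
  have hfinite (u : Finset s) : ∑ i ∈ u, i.1.2 ≤ C := by
    simpa using hC (u.map (Function.Embedding.subtype _)) (by simp)
  have hsummable : Summable fun i : s => i.1.2 :=
    summable_of_sum_le (fun i => (hpos i i.2).le) hfinite
  have hcomp : (fun n => (D n).2) ∘ e = fun i : s => i.1.2 := funext fun i => by simp [hDe]
  refine ⟨D, fun n => ?_, fun h hh => ⟨e ⟨h, hh⟩, hDe _⟩, fun n hn => ?_, fun n hn m hm hnm => ?_,
    ?_, ?_⟩
  · by_cases hn : n ∈ range e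
    · obtain ⟨i, rfl⟩ := hn
      exact hDe i ▸ (hpos i i.2).le
    · simp [hD₀ n hn]
  · obtain ⟨i, rfl⟩ := hmem hn
    exact hDe i ▸ i.2
  · obtain ⟨i, rfl⟩ := hmem hn
    obtain ⟨j, rfl⟩ := hmem hm
    rw [hDe, hDe] at hnm
    rw [Subtype.ext hnm]
  · exact (he.summable_iff fun n hn => by simp [hD₀ n hn]).1 (hcomp ▸ hsummable)
  · rw [← he.tsum_eq fun n hn => by_contra fun hne => hn (by simp [hD₀ n hne])]
    simpa only [hDe] using hsummable.tsum_le_of_sum_le hfinite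

theorem sum_le_of_subset_iUnion_sdiff {H : ℕ → Finset Disk} (hH : Monotone H)
    (hpos : ∀ m, ∀ h ∈ H m, 0 < h.2) {ε : ℝ} (hsum : ∀ m, ∑ h ∈ H m, h.2 < ∑ h ∈ H 0, h.2 + ε)
    {u : Finset Disk} (hu : (u : Set Disk) ⊆ (⋃ m, (H m : Set Disk)) \ H 0) :
    ∑ h ∈ u, h.2 ≤ ε := by
  classical
  obtain ⟨m, hm⟩ : ∃ m, u ⊆ H m := by
    obtain ⟨m, hm⟩ := Directed.exists_mem_subset_of_finset_subset_biUnion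
      (f := fun m => (H m : Set Disk)) (Monotone.directed_le fun m n hmn => hH hmn)
      (hu.trans sdiff_subset)
    exact ⟨m, hm⟩
  have hdisjoint : Disjoint u (H 0) :=
    Finset.disjoint_left.2 fun h hh => (hu hh).2
  have hle : ∑ h ∈ u, h.2 + ∑ h ∈ H 0, h.2 ≤ ∑ h ∈ H m, h.2 := by
    rw [← Finset.sum_union hdisjoint]
    exact Finset.sum_le_sum_of_subset_of_nonneg (Finset.union_subset hm (hH zero_le))
      fun h hh _ => (hpos m h hh).le
  linarith [hsum m]

namespace SwissCheese

variable {A : SwissCheese} {N : ℕ}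

/-- The `n`-th disk of `A`, as a pair of a centre and a radius. -/
def disk (A : SwissCheese) (n : ℕ) : Disk := (A.a n, A.r n)

/-- The holes of `A` with index at most `N`; the degenerate disks, of radius `0`, are left out. -/
noncomputable def initialHoles (A : SwissCheese) (N : ℕ) : Finset Disk :=
  open Classical in {n ∈ Finset.Iic N | n ∈ A.sig}.image A.disk

/-- The Swiss cheese that agrees with `A` up to the index `N` and continues with the sequence of
disks `D`. -/
def splice (A : SwissCheese) (N : ℕ) (D : ℕ → Disk) (hD : ∀ n, 0 ≤ (D n).2) : SwissCheese where
  a n := if n ≤ N then A.a n else (D (n - (N + 1))).1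
  r n := if n ≤ N then A.r n else (D (n - (N + 1))).2
  r_nonneg n := by
    split_ifs
    exacts [A.r_nonneg n, hD _]

theorem isClassical_of_isAdmissible {H : ℕ → Finset Disk} (hH : Monotone H)
    (hadm : ∀ m, IsAdmissible (A.disk 0) (H m)) (hr₀ : 0 < A.r 0) (hsum : A.RadSummable)
    (hmem : ∀ n ∈ A.sig, A.disk n ∈ ⋃ m, (H m : Set Disk)) (hinj : InjOn A.disk A.sig) :
    A.IsClassical := by
  refine ⟨hsum, hr₀, fun k hk => ?_⟩
  obtain ⟨m, hm⟩ := mem_iUnion.1 (hmem k hk)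
  refine ⟨(hadm m).subset_ball _ hm, fun l hl hlk => ?_⟩
  obtain ⟨m', hm'⟩ := mem_iUnion.1 (hmem l hl)
  exact ((hadm (max m m')).disjoint _ (hH (le_max_left m m') hm) _ (hH (le_max_right m m') hm')
    fun heq => hlk (hinj hl hk heq.symm)).inter_eq

theorem cheeseSet_subset_region {H : Finset Disk} (hH : ∀ h ∈ H, ∃ n, 1 ≤ n ∧ A.disk n = h) :
    A.cheeseSet ⊆ region (A.disk 0) H := by
  refine sdiff_subset_sdiff_right (iUnion₂_subset fun h hh => ?_)
  obtain ⟨n, hn, rfl⟩ := hH h hh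
  exact subset_biUnion_of_mem (u := fun n => ball (A.a n) (A.r n)) (mem_Ici.2 hn)

theorem mem_initialHoles {h : Disk} :
    h ∈ A.initialHoles N ↔ ∃ n ≤ N, n ∈ A.sig ∧ A.disk n = h := by
  simp [initialHoles, and_assoc]

theorem IsClassical.isAdmissible_initialHoles (hA : A.IsClassical) (N : ℕ) :
    IsAdmissible (A.disk 0) (A.initialHoles N) where
  pos h hh := by
    obtain ⟨n, -, hn, rfl⟩ := mem_initialHoles.1 hh
    exact hn.2
  subset_ball h hh := by
    obtain ⟨n, -, hn, rfl⟩ := mem_initialHoles.1 hh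
    exact (hA.2.2 n hn).1
  disjoint h hh g hg hne := by
    obtain ⟨n, -, hn, rfl⟩ := mem_initialHoles.1 hh
    obtain ⟨m, -, hm, rfl⟩ := mem_initialHoles.1 hg
    exact disjoint_iff_inter_eq_empty.2
      ((hA.2.2 n hn).2 m hm fun hmn => hne (congrArg A.disk hmn.symm))

theorem IsClassical.injOn_disk (hA : A.IsClassical) : InjOn A.disk A.sig := by
  intro n hn m hm hnm
  by_contra hne
  have hempty := (hA.2.2 n hn).2 m hm (Ne.symm hne)
  obtain ⟨ha, hr⟩ := Prod.mk.inj hnm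
  rw [← ha, ← hr, inter_self, closedBall_eq_empty] at hempty
  exact hempty.not_ge hn.2.le

section Splice

variable {D : ℕ → Disk} {hD : ∀ n, 0 ≤ (D n).2}

theorem disk_splice_of_le {n : ℕ} (hn : n ≤ N) : (A.splice N D hD).disk n = A.disk n := by
  simp [disk, splice, hn]

theorem disk_splice_add (n : ℕ) : (A.splice N D hD).disk (n + (N + 1)) = D n := by
  simp [disk, splice, show ¬ n + (N + 1) ≤ N by omega]

theorem r_splice_of_le {n : ℕ} (hn : n ≤ N) : (A.splice N D hD).r n = A.r n :=
  if_pos hn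

theorem r_splice_add (n : ℕ) : (A.splice N D hD).r (n + (N + 1)) = (D n).2 :=
  congrArg Prod.snd (disk_splice_add (A := A) (hD := hD) n)

theorem radSummable_splice (hsum : Summable fun n => (D n).2) :
    (A.splice N D hD).RadSummable := by
  refine (summable_nat_add_iff 1).2 ((summable_nat_add_iff (N + 1)).1 ?_)
  simpa only [r_splice_add] using hsum

theorem mem_sig_splice {n : ℕ} (hn : n ∈ (A.splice N D hD).sig) :
    (n ≤ N ∧ n ∈ A.sig) ∨ ∃ k, k + (N + 1) = n ∧ 0 < (D k).2 := by
  rcases le_or_gt n N with hnN | hnN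
  · exact .inl ⟨hnN, hn.1, hn.2.trans_eq (r_splice_of_le hnN)⟩
  · obtain ⟨k, rfl⟩ := Nat.exists_eq_add_of_le' hnN
    exact .inr ⟨k, rfl, hn.2.trans_eq (r_splice_add k)⟩

theorem injOn_disk_splice (hA : A.IsClassical)
    (hnew : ∀ n, 0 < (D n).2 → D n ∉ A.initialHoles N) (hinj : InjOn D {n | 0 < (D n).2}) :
    InjOn (A.splice N D hD).disk (A.splice N D hD).sig := by
  have hne {n k : ℕ} (hn : n ≤ N ∧ n ∈ A.sig) (hk : 0 < (D k).2) : A.disk n ≠ D k :=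
    fun h => hnew k hk (mem_initialHoles.2 ⟨n, hn.1, hn.2, h⟩)
  intro n hn m hm hnm
  rcases mem_sig_splice hn with hn | ⟨k, rfl, hk⟩ <;>
    rcases mem_sig_splice hm with hm | ⟨l, rfl, hl⟩
  · rw [disk_splice_of_le hn.1, disk_splice_of_le hm.1] at hnm
    exact hA.injOn_disk hn.2 hm.2 hnm
  · rw [disk_splice_of_le hn.1, disk_splice_add] at hnm
    exact absurd hnm (hne hn hl)
  · rw [disk_splice_of_le hm.1, disk_splice_add] at hnm
    exact absurd hnm.symm (hne hm hk)
  · rw [disk_splice_add, disk_splice_add] at hnm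
    rw [hinj hk hl hnm]

theorem disk_splice_mem {s : Set Disk} (hDs : ∀ n, 0 < (D n).2 → D n ∈ s) {n : ℕ}
    (hn : n ∈ (A.splice N D hD).sig) : (A.splice N D hD).disk n ∈ ↑(A.initialHoles N) ∪ s := by
  rcases mem_sig_splice hn with ⟨hnN, hn⟩ | ⟨k, rfl, hk⟩
  · exact .inl (mem_initialHoles.2 ⟨n, hnN, hn, (disk_splice_of_le hnN).symm⟩)
  · exact .inr (disk_splice_add (A := A) k ▸ hDs k hk)

theorem exists_disk_splice_eq {h : Disk} (hh : h ∈ ↑(A.initialHoles N) ∪ range D) :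
    ∃ n, 1 ≤ n ∧ (A.splice N D hD).disk n = h := by
  rcases hh with hh | ⟨n, rfl⟩
  · obtain ⟨n, hnN, hn, rfl⟩ := mem_initialHoles.1 hh
    exact ⟨n, hn.1, disk_splice_of_le hnN⟩
  · exact ⟨n + (N + 1), by omega, disk_splice_add n⟩

end Splice

/-- The Swiss cheese whose only hole is the disk of radius `s₁` about the centre `b` of its outer
disk. -/
def annulus (b : ℂ) {s₀ s₁ : ℝ} (hs₀ : 0 ≤ s₀) (hs₁ : 0 ≤ s₁) : SwissCheese where
  a _ := b
  r n := if n = 0 then s₀ else if n = 1 then s₁ else 0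
  r_nonneg n := by
    split_ifs
    exacts [hs₀, hs₁, le_rfl]

theorem isClassical_annulus (b : ℂ) {s₀ s₁ : ℝ} (hs₁ : 0 ≤ s₁) (hs : s₁ < s₀) :
    (annulus b (hs₁.trans hs.le) hs₁).IsClassical := by
  have hsig : ∀ n ∈ (annulus b (hs₁.trans hs.le) hs₁).sig, n = 1 := by
    intro n hn
    by_contra hne
    simpa [annulus, Nat.one_le_iff_ne_zero.1 hn.1, hne] using hn.2
  refine ⟨(summable_nat_add_iff 1).2 (summable_of_hasFiniteSupport
    ((finite_le_nat 1).subset fun n hn => ?_)), ?_, fun k hk => ⟨?_, fun l hl hlk => ?_⟩⟩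
  · by_contra hlt
    rw [mem_ofPred_eq, not_le] at hlt
    exact hn (by simp [annulus, (zero_lt_one.trans hlt).ne', hlt.ne'])
  · simpa [annulus] using hs₁.trans_lt hs
  · rw [hsig k hk]
    exact closedBall_subset_ball hs
  · exact absurd ((hsig l hl).trans (hsig k hk).symm) hlk

end SwissCheese

open SwissCheese in
theorem stmt_12_general (A₀ : SwissCheese) (hA₀ : A₀.IsClassical) (N : ℕ) (ε : ℝ) (hε : 0 < ε) :
    ∃ A : SwissCheese, A.IsClassical ∧ (∀ n ≤ N, A.a n = A₀.a n ∧ A.r n = A₀.r n) ∧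
      ∑' n, A.r (n + (N + 1)) < ε ∧ RxRegular A.cheeseSet := by
  obtain ⟨H, hH₀, hmono, hadm, hsum, hregular⟩ := exists_monotone_holes_forall_rxRegular
    hA₀.2.1.le (hA₀.isAdmissible_initialHoles N) (half_pos hε)
  set U : Set Disk := ⋃ m, (H m : Set Disk)
  obtain ⟨D, hD, hsD, hDs, hinj, hsummable, htsum⟩ := exists_seq_disk_of_countable
    (s := U \ H 0) ((countable_iUnion fun m => (H m).countable_toSet).mono sdiff_subset)
    (fun h hh => (mem_iUnion.1 hh.1).elim fun m hm => (hadm m).pos h hm)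
    fun u hu => sum_le_of_subset_iUnion_sdiff hmono (fun m => (hadm m).pos) (hH₀ ▸ hsum) hu
  have hU : ↑(A₀.initialHoles N) ∪ U \ H 0 = U :=
    hH₀ ▸ union_sdiff_cancel (subset_iUnion (fun m => (H m : Set Disk)) 0)
  set A := A₀.splice N D hD
  have hdisk₀ : A.disk 0 = A₀.disk 0 := disk_splice_of_le zero_le
  have hholes : ∀ m, ∀ h ∈ H m, ∃ n, 1 ≤ n ∧ A.disk n = h := fun m h hh =>
    exists_disk_splice_eq (union_subset_union_right _ hsD (hU.superset (mem_iUnion_of_mem m hh)))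
  refine ⟨A, isClassical_of_isAdmissible hmono (hdisk₀ ▸ hadm) ?_ (radSummable_splice hsummable)
    (fun n hn => hU.subset (disk_splice_mem hDs hn))
    (injOn_disk_splice hA₀ (fun n hn => hH₀ ▸ (hDs n hn).2) hinj),
    fun n hn => Prod.mk.inj (disk_splice_of_le hn), ?_,
    hregular _ fun m => hdisk₀ ▸ cheeseSet_subset_region (hholes m)⟩
  · exact hA₀.2.1.trans_eq (r_splice_of_le zero_le).symm
  · simpa only [A, r_splice_add] using htsum.trans_lt (half_lt_self hε)

/-- for every `b ∈ ℂ`, `s₀ > s₁ ≥ 0` and `ε > 0` there is a *classical*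
abstract Swiss cheese `A` with `a₀ = a₁ = b`, `r₀ = s₀`, `r₁ = s₁` and `∑_{n ≥ 2} r_n < ε`,
such that `R(X_A)` is regular. -/
theorem stmt_12 (b : ℂ) (s₀ s₁ : ℝ) (hs₁ : 0 ≤ s₁) (hs : s₁ < s₀) (ε : ℝ) (hε : 0 < ε) :
    ∃ A : SwissCheese, A.IsClassical ∧ A.a 0 = b ∧ A.a 1 = b ∧ A.r 0 = s₀ ∧ A.r 1 = s₁ ∧
      A.annRadSum < ε ∧
      RxRegular A.cheeseSet := by
  obtain ⟨A, hA, hA₀, hsum, hregular⟩ :=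
    stmt_12_general _ (SwissCheese.isClassical_annulus b hs₁ hs) 1 ε hε
  exact ⟨A, hA, (hA₀ 0 zero_le_one).1, (hA₀ 1 le_rfl).1, (hA₀ 0 zero_le_one).2, (hA₀ 1 le_rfl).2,
    hsum, hregular⟩
end

section
/- Let a_1, a_2 ∈ ℂ and let r_1, r_2 > 0 be such that ball(a_1, r_1) is not contained in ball(a_2, r_2) and ball(a_2, r_2) is not contained in ball(a_1, r_1). Then there exists a unique pair (a, r) ∈ ℂ × (0, ∞) such that r > r_1 − r_2, closedBall(a, r) ⊆ closedBall(a_1, r_1), closedBall(a, r) ∩ ball(a_2, r_2) = ∅, and r is maximal among all radii r' for which some closed disk closedBall(a', r') is contained in closedBall(a_1, r_1) and disjoint from ball(a_2, r_2). -/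
open Metric

/-!
A closed ball of centre `c` and radius `r ≥ 0` lies in `closedBall a₁ r₁` and misses `ball a₂ r₂`
exactly when `dist c a₁ + r ≤ r₁` and `r + r₂ ≤ dist c a₂`. The first condition gives `r ≤ r₁`;
summing both and using `dist c a₂ ≤ dist c a₁ + dist a₁ a₂` gives `2 * r ≤ dist a₁ a₂ + r₁ - r₂`.
Hence `r ≤ min r₁ ((dist a₁ a₂ + r₁ - r₂) / 2)`. For this value of `r` the constraints force
`c` to lie at distance `r₁ - r` from `a₁` and to realise equality in the triangle inequality; strict
convexity then puts `c` on the ray from `a₂` through `a₁`, beyond `a₁`, which determines it.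
-/

section NormedSpace

variable {E : Type*} [NormedAddCommGroup E] [NormedSpace ℝ E]

lemma exists_dist_eq_and_dist_eq_dist_add [Nontrivial E] (x y : E) {s : ℝ} (hs : 0 ≤ s) :
    ∃ z, dist z x = s ∧ dist z y = dist x y + s := by
  obtain ⟨u, hu, hray⟩ : ∃ u : E, ‖u‖ = s ∧ SameRay ℝ u (x - y) := by
    rcases eq_or_ne x y with rfl | hxy
    · obtain ⟨u, hu⟩ := exists_norm_eq E hs
      exact ⟨u, hu, by simp⟩
    · have hd : ‖x - y‖ ≠ 0 := norm_ne_zero_iff.2 (sub_ne_zero.2 hxy)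
      refine ⟨(s / ‖x - y‖) • (x - y), ?_, .sameRay_nonneg_smul_left _ (by positivity)⟩
      rw [norm_smul_of_nonneg (by positivity), div_mul_cancel₀ s hd]
  refine ⟨u + x, by rw [dist_add_self_left, hu], ?_⟩
  rw [dist_eq_norm, add_sub_assoc, hray.norm_add, hu, dist_eq_norm, add_comm]

lemma eq_of_dist_eq_of_dist_eq_dist_add [StrictConvexSpace ℝ E] {x y z w : E} (hxy : x ≠ y)
    (hzw : dist z x = dist w x) (hz : dist z y = dist z x + dist x y)
    (hw : dist w y = dist w x + dist x y) : z = w := by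
  simp only [dist_eq_norm] at hzw hz hw
  have sameRay_sub {p : E} (hp : ‖p - y‖ = ‖p - x‖ + ‖x - y‖) : SameRay ℝ (p - x) (x - y) := by
    rwa [sameRay_iff_norm_add, sub_add_sub_cancel]
  exact sub_left_injective <|
    norm_injOn_ray_right (sub_ne_zero.2 hxy) (sameRay_sub hz) (sameRay_sub hw) hzw

lemma existsUnique_dist_le_and_dist_add_le [StrictConvexSpace ℝ E] {x y : E} (hxy : x ≠ y)
    {s : ℝ} (hs : 0 ≤ s) : ∃! z, dist z x ≤ s ∧ dist x y + s ≤ dist z y := by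
  have : Nontrivial E := nontrivial_of_ne x y hxy
  obtain ⟨z, hzx, hzy⟩ := exists_dist_eq_and_dist_eq_dist_add x y hs
  refine ⟨z, ⟨hzx.le, hzy.ge⟩, fun w ⟨hwx, hwy⟩ ↦ ?_⟩
  have htri := dist_triangle w x y
  exact eq_of_dist_eq_of_dist_eq_dist_add hxy (by linarith) (by linarith) (by linarith)

lemma closedBall_subset_closedBall_iff_dist_add_le [Nontrivial E] {a b : E} {r R : ℝ}
    (hr : 0 ≤ r) : closedBall a r ⊆ closedBall b R ↔ dist a b + r ≤ R := by
  refine ⟨fun h ↦ ?_, fun h ↦ closedBall_subset_closedBall' (by linarith)⟩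
  obtain ⟨z, hza, hzb⟩ := exists_dist_eq_and_dist_eq_dist_add a b hr
  exact hzb ▸ h hza.le

lemma closedBall_subset_closedBall_sdiff_ball_iff [Nontrivial E] {a₁ a₂ c : E} {r₁ r₂ r : ℝ}
    (hr : 0 ≤ r) (hr₂ : 0 < r₂) :
    closedBall c r ⊆ closedBall a₁ r₁ \ ball a₂ r₂ ↔
      dist c a₁ + r ≤ r₁ ∧ r + r₂ ≤ dist c a₂ := by
  rw [Set.subset_sdiff, closedBall_subset_closedBall_iff_dist_add_le hr,
    disjoint_closedBall_ball_iff hr hr₂]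

end NormedSpace

section InscribedRadius

/-- In a real normed space, the largest radius of a closed ball contained in
`closedBall a₁ r₁ \ ball a₂ r₂`, provided that neither of `ball a₁ r₁`, `ball a₂ r₂` contains the
other. The minimum is `r₁` when the two balls are disjoint, and the other term when they overlap. -/
noncomputable def inscribedRadius {X : Type*} [Dist X] (a₁ a₂ : X) (r₁ r₂ : ℝ) : ℝ :=
  min r₁ ((dist a₁ a₂ + r₁ - r₂) / 2)

variable {X : Type*}

section Dist

variable [Dist X] {a₁ a₂ : X} {r₁ r₂ : ℝ}

lemma inscribedRadius_le_left : inscribedRadius a₁ a₂ r₁ r₂ ≤ r₁ :=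
  min_le_left _ _

lemma inscribedRadius_pos (hr₁ : 0 < r₁) (h : r₂ < r₁ + dist a₁ a₂) :
    0 < inscribedRadius a₁ a₂ r₁ r₂ :=
  lt_min hr₁ (by linarith)

lemma sub_lt_inscribedRadius (hr₂ : 0 < r₂) (h : r₁ < r₂ + dist a₁ a₂) :
    r₁ - r₂ < inscribedRadius a₁ a₂ r₁ r₂ :=
  lt_min (by linarith) (by linarith)

end Dist

section PseudoMetricSpace

variable [PseudoMetricSpace X] {a₁ a₂ c : X} {r₁ r₂ r : ℝ}

lemma le_inscribedRadius (h₁ : dist c a₁ + r ≤ r₁) (h₂ : r + r₂ ≤ dist c a₂) :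
    r ≤ inscribedRadius a₁ a₂ r₁ r₂ := by
  have htri := dist_triangle c a₁ a₂
  exact le_min (by linarith [dist_nonneg (x := c) (y := a₁)]) (by linarith)

lemma inscribedRadius_add_le_dist_iff (h : dist c a₁ ≤ r₁ - inscribedRadius a₁ a₂ r₁ r₂) :
    inscribedRadius a₁ a₂ r₁ r₂ + r₂ ≤ dist c a₂ ↔
      dist a₁ a₂ + (r₁ - inscribedRadius a₁ a₂ r₁ r₂) ≤ dist c a₂ := by
  rcases min_choice r₁ ((dist a₁ a₂ + r₁ - r₂) / 2) with hρ | hρ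
  · have hfar : dist a₁ a₂ ≤ dist c a₂ := by
      rw [inscribedRadius, hρ] at h
      linarith [dist_triangle_left a₁ a₂ c]
    have hdisj : r₁ ≤ (dist a₁ a₂ + r₁ - r₂) / 2 := min_eq_left_iff.1 hρ
    rw [inscribedRadius, hρ]
    constructor <;> intro <;> linarith
  · rw [inscribedRadius, hρ]
    ring_nf

end PseudoMetricSpace

section NormedSpace

variable {E : Type*} [NormedAddCommGroup E] [NormedSpace ℝ E] {a₁ a₂ c : E} {r₁ r₂ r : ℝ}

lemma le_inscribedRadius_of_closedBall_subset [Nontrivial E] (hr₂ : 0 < r₂)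
    (hρ : 0 ≤ inscribedRadius a₁ a₂ r₁ r₂)
    (h : closedBall c r ⊆ closedBall a₁ r₁ \ ball a₂ r₂) :
    r ≤ inscribedRadius a₁ a₂ r₁ r₂ := by
  rcases lt_or_ge r 0 with hr | hr
  · exact hr.le.trans hρ
  · obtain ⟨h₁, h₂⟩ := (closedBall_subset_closedBall_sdiff_ball_iff hr hr₂).1 h
    exact le_inscribedRadius h₁ h₂

lemma existsUnique_closedBall_inscribedRadius_subset [StrictConvexSpace ℝ E] (hne : a₁ ≠ a₂)
    (hr₂ : 0 < r₂) (hρ : 0 ≤ inscribedRadius a₁ a₂ r₁ r₂) :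
    ∃! c, closedBall c (inscribedRadius a₁ a₂ r₁ r₂) ⊆ closedBall a₁ r₁ \ ball a₂ r₂ := by
  have : Nontrivial E := nontrivial_of_ne a₁ a₂ hne
  simp only [closedBall_subset_closedBall_sdiff_ball_iff hρ hr₂, ← le_sub_iff_add_le (c := r₁),
    and_congr_right_iff.2 inscribedRadius_add_le_dist_iff]
  exact existsUnique_dist_le_and_dist_add_le hne (sub_nonneg.2 inscribedRadius_le_left)

end NormedSpace

end InscribedRadius

theorem stmt_14_general {E : Type*} [NormedAddCommGroup E] [NormedSpace ℝ E]
    [StrictConvexSpace ℝ E] (a₁ a₂ : E) (r₁ r₂ : ℝ)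
    (h₁₂ : ¬ ball a₁ r₁ ⊆ ball a₂ r₂) (h₂₁ : ¬ ball a₂ r₂ ⊆ ball a₁ r₁) :
    ∃! p : E × ℝ, 0 < p.2 ∧ r₁ - r₂ < p.2 ∧
      closedBall p.1 p.2 ⊆ closedBall a₁ r₁ ∧
      closedBall p.1 p.2 ∩ ball a₂ r₂ = ∅ ∧
      ∀ (a' : E) (r' : ℝ), closedBall a' r' ⊆ closedBall a₁ r₁ →
        closedBall a' r' ∩ ball a₂ r₂ = ∅ → r' ≤ p.2 := by
  have hr₁ : 0 < r₁ := nonempty_ball.1 ((Set.nonempty_of_not_subset h₁₂).mono Set.sdiff_subset)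
  have hr₂ : 0 < r₂ := nonempty_ball.1 ((Set.nonempty_of_not_subset h₂₁).mono Set.sdiff_subset)
  have hlt₂ : r₂ < r₁ + dist a₁ a₂ := not_le.1 (mt ball_subset_ball' h₁₂)
  have hlt₁ : r₁ < r₂ + dist a₁ a₂ := dist_comm a₁ a₂ ▸ not_le.1 (mt ball_subset_ball' h₂₁)
  have hne : a₁ ≠ a₂ := dist_pos.1 (by linarith)
  have : Nontrivial E := nontrivial_of_ne a₁ a₂ hne
  have hρ := inscribedRadius_pos hr₁ hlt₂
  have hmax {c : E} {r : ℝ} (h₁ : closedBall c r ⊆ closedBall a₁ r₁)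
      (h₂ : Disjoint (closedBall c r) (ball a₂ r₂)) : r ≤ inscribedRadius a₁ a₂ r₁ r₂ :=
    le_inscribedRadius_of_closedBall_subset hr₂ hρ.le (Set.subset_sdiff.2 ⟨h₁, h₂⟩)
  obtain ⟨c, hc, hc_unique⟩ := existsUnique_closedBall_inscribedRadius_subset hne hr₂ hρ.le
  obtain ⟨hc₁, hc₂⟩ := Set.subset_sdiff.1 hc
  simp only [← Set.disjoint_iff_inter_eq_empty]
  refine ⟨(c, inscribedRadius a₁ a₂ r₁ r₂),
    ⟨hρ, sub_lt_inscribedRadius hr₂ hlt₁, hc₁, hc₂, fun _ _ ↦ hmax⟩, ?_⟩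
  rintro ⟨a, r⟩ ⟨-, -, ha₁, ha₂, hr_max⟩
  obtain rfl : r = inscribedRadius a₁ a₂ r₁ r₂ := (hmax ha₁ ha₂).antisymm (hr_max c _ hc₁ hc₂)
  rw [hc_unique a (Set.subset_sdiff.2 ⟨ha₁, ha₂⟩)]

/-- if neither of two open disks of positive radii is contained in the other,
then there is a unique pair `(a, r)` with `r > 0`, `r > r₁ − r₂`,
`closedBall(a, r) ⊆ closedBall(a₁, r₁)`, `closedBall(a, r) ∩ ball(a₂, r₂) = ∅`, and `r`
maximal among all radii of closed disks contained in `closedBall(a₁, r₁)` and disjoint from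
`ball(a₂, r₂)`. -/
theorem stmt_14 (a₁ a₂ : ℂ) (r₁ r₂ : ℝ) (hr₁ : 0 < r₁) (hr₂ : 0 < r₂)
    (h₁₂ : ¬ ball a₁ r₁ ⊆ ball a₂ r₂) (h₂₁ : ¬ ball a₂ r₂ ⊆ ball a₁ r₁) :
    ∃! p : ℂ × ℝ, 0 < p.2 ∧ r₁ - r₂ < p.2 ∧
      closedBall p.1 p.2 ⊆ closedBall a₁ r₁ ∧
      closedBall p.1 p.2 ∩ ball a₂ r₂ = ∅ ∧
      ∀ (a' : ℂ) (r' : ℝ), closedBall a' r' ⊆ closedBall a₁ r₁ →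
        closedBall a' r' ∩ ball a₂ r₂ = ∅ → r' ≤ p.2 :=
  stmt_14_general a₁ a₂ r₁ r₂ h₁₂ h₂₁
end
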